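/- Suppose the seminorm N satisfies N(ν) ≤ Σ_{f∈F} d(f)|ν(f)| for every finite signed measure ν, where F is a countable family of measurable functions satisfying Assumption 1 and the d(f) are positive constants with Σ_{f∈F} d(f)‖f‖ < ∞. Suppose there is a constant b > 0 such that P[N(P_n − Q_n) ≤ b] → 0 as n → ∞. Then θ̂_n − θ = O_p(n^{−1}). -/

import Mathlib

open MeasureTheory Filter

/-- The integral `ν(f) = ∫ f dν` of a function against a finite signed measure,
via the Jordan decomposition. -/
noncomputable def sIntegral {E : Type*} [MeasurableSpace E] (ν : SignedMeasure E) (f : E → ℝ) : ℝ :=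
  ∫ x, f x ∂ν.toJordanDecomposition.posPart - ∫ x, f x ∂ν.toJordanDecomposition.negPart

/-- Covariance of two real random variables. -/
noncomputable def covar {Ω : Type*} [MeasurableSpace Ω] (μ : Measure Ω) (Y Z : Ω → ℝ) : ℝ :=
  ∫ ω, (Y ω - ∫ ω', Y ω' ∂μ) * (Z ω - ∫ ω', Z ω' ∂μ) ∂μ

/-- Variance of a real random variable. -/
noncomputable def variance' {Ω : Type*} [MeasurableSpace Ω] (μ : Measure Ω) (Y : Ω → ℝ) : ℝ :=
  covar μ Y Y

/-- `A_n = O_p(c_n)`: `lim_{M→∞} limsup_{n→∞} P(|A_n| > M c_n) = 0`. -/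
def IsOp {Ω : Type*} [MeasurableSpace Ω] (μ : Measure Ω) (A : ℕ → Ω → ℝ) (c : ℕ → ℝ) : Prop :=
  Tendsto (fun M : ℝ => Filter.limsup (fun n => μ {ω | M * c n < |A n ω|}) atTop)
    atTop (nhds 0)


open scoped ENNReal NNReal

section SignedIntegral

variable {E : Type*} [MeasurableSpace E]

theorem sIntegral_toSignedMeasure_sub (μ ν : Measure E) [IsFiniteMeasure μ] [IsFiniteMeasure ν]
    (f : E → ℝ) :
    sIntegral (μ.toSignedMeasure - ν.toSignedMeasure) f =
      ∫ x, f x ∂(μ - ν) - ∫ x, f x ∂(ν - μ) := by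
  rw [sIntegral, Measure.toJordanDecomposition_toSignedMeasure_sub]
  rfl

theorem sIntegral_sub_of_integrable (μ ν : Measure E) [IsFiniteMeasure μ] [IsFiniteMeasure ν]
    {f : E → ℝ} (hμ : Integrable f μ) (hν : Integrable f ν) :
    sIntegral (μ.toSignedMeasure - ν.toSignedMeasure) f = ∫ x, f x ∂μ - ∫ x, f x ∂ν := by
  have h : μ - ν + ν = ν - μ + μ := by
    have h1 := Measure.sub_toSignedMeasure_eq_toSignedMeasure_sub (μ := μ) (ν := ν)
    have h2 : (μ - ν + ν).toSignedMeasure = (ν - μ + μ).toSignedMeasure := by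
      rw [Measure.toSignedMeasure_add, Measure.toSignedMeasure_add]
      rw [sub_eq_sub_iff_add_eq_add] at h1
      rw [← h1.symm.trans (add_comm _ _), add_comm]
    exact Measure.toSignedMeasure_eq_toSignedMeasure_iff.1 h2
  have h1 : Integrable f (μ - ν) := hμ.mono_measure Measure.sub_le
  have h2 : Integrable f (ν - μ) := hν.mono_measure Measure.sub_le
  have h3 := congrArg (fun m => ∫ x, f x ∂m) h
  simp only [integral_add_measure h1 hν, integral_add_measure h2 hμ] at h3
  rw [sIntegral_toSignedMeasure_sub]
  linarith

theorem lintegral_sub_eq_top {μ ν : Measure E} [IsFiniteMeasure μ] [IsFiniteMeasure ν]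
    {g : E → ℝ≥0∞} {S : Set E} (hS : MeasurableSet S) (hνS : ν S = 0)
    (hμ : ∫⁻ x in S, g x ∂μ = ∞) : ∫⁻ x, g x ∂(μ - ν) = ∞ := by
  have h : (μ - ν).restrict S = μ.restrict S := by
    rw [Measure.restrict_sub_eq_restrict_sub_restrict hS, Measure.restrict_eq_zero.2 hνS,
      Measure.sub_zero]
  rw [eq_top_iff, ← hμ, ← h]
  exact lintegral_mono' Measure.restrict_le_self le_rfl

theorem integral_eq_zero_of_lintegral_enorm_eq_top {μ : Measure E} {f : E → ℝ}
    (h : ∫⁻ x, ‖f x‖ₑ ∂μ = ∞) : ∫ x, f x ∂μ = 0 :=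
  integral_undef fun hf => hf.2.ne h

end SignedIntegral

section Seminorm

variable {V : Type*} [AddCommGroup V] [Module ℝ V] {N : V → ℝ}

theorem seminorm_neg (hs : ∀ (a : ℝ) ν, N (a • ν) = |a| * N ν) (ν : V) : N (-ν) = N ν := by
  have := hs (-1) ν
  simpa using this

theorem seminorm_nonneg (hs : ∀ (a : ℝ) ν, N (a • ν) = |a| * N ν)
    (ha : ∀ ν₁ ν₂, N (ν₁ + ν₂) ≤ N ν₁ + N ν₂) (ν : V) : 0 ≤ N ν := by
  have h0 : N 0 = 0 := by simpa using hs 0 0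
  have h1 := ha ν (-ν)
  rw [seminorm_neg hs, add_neg_cancel, h0] at h1
  linarith

end Seminorm

theorem ENNReal.ofReal_tsum_le {ι : Type*} (u : ι → ℝ) (hu : ∀ i, 0 ≤ u i) :
    ENNReal.ofReal (∑' i, u i) ≤ ∑' i, ENNReal.ofReal (u i) := by
  by_cases h : Summable u
  · exact (ENNReal.ofReal_tsum_of_nonneg hu h).le
  · simp [tsum_eq_zero_of_not_summable h]

theorem ENNReal.le_of_forall_add_mul_le {x y z : ℝ≥0∞} (hz : z ≠ ∞)
    (h : ∀ t : ℝ≥0, 0 < t → x ≤ y + t * z) : x ≤ y := by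
  refine ENNReal.le_of_forall_pos_le_add fun ε hε _ => ?_
  lift z to ℝ≥0 using hz
  have hz' : 0 < z + 1 := by positivity
  refine (h (ε / (z + 1)) (by positivity)).trans ?_
  gcongr
  norm_cast
  rw [div_mul_eq_mul_div, div_le_iff₀ hz']
  nlinarith [zero_le (a := ε)]

section Elimination

variable {E : Type*} [MeasurableSpace E] {ι : Type*}

theorem integrable_of_lintegral_tsum_ne_top {d : ι → ℝ} (hd : ∀ i, 0 < d i) {g : ι → E → ℝ}
    (hg : ∀ i, Measurable (g i)) {μ : Measure E}
    (hμ : ∫⁻ x, ∑' i, ENNReal.ofReal (d i) * ‖g i x‖ₑ ∂μ ≠ ∞) (i : ι) : Integrable (g i) μ := by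
  refine ⟨(hg i).aestronglyMeasurable, ?_⟩
  have h1 : ENNReal.ofReal (d i) * ∫⁻ x, ‖g i x‖ₑ ∂μ ≠ ∞ := by
    rw [← lintegral_const_mul _ (hg i).enorm]
    refine ne_top_of_le_ne_top hμ (lintegral_mono fun x => ?_)
    exact ENNReal.le_tsum (f := fun i => ENNReal.ofReal (d i) * ‖g i x‖ₑ) i
  rw [HasFiniteIntegral, lt_top_iff_ne_top]
  intro h
  rw [h, ENNReal.mul_top (by simpa using hd i)] at h1
  exact h1 rfl

theorem seminorm_sub_le_of_perturbation [Countable ι] {N : SignedMeasure E → ℝ}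
    (hN_smul : ∀ (a : ℝ) (ν : SignedMeasure E), N (a • ν) = |a| * N ν)
    (hN_add : ∀ ν₁ ν₂ : SignedMeasure E, N (ν₁ + ν₂) ≤ N ν₁ + N ν₂)
    {d : ι → ℝ} (hd : ∀ i, 0 < d i) {f g : ι → E → ℝ}
    (hNle : ∀ ν : SignedMeasure E, N ν ≤ ∑' i, d i * |sIntegral ν (f i)|)
    (hg : ∀ i, Measurable (g i))
    (μ ν η₁ η₂ : Measure E) [IsFiniteMeasure μ] [IsFiniteMeasure ν]
    [IsFiniteMeasure η₁] [IsFiniteMeasure η₂]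
    (hμ : ∫⁻ x, ∑' i, ENNReal.ofReal (d i) * ‖g i x‖ₑ ∂μ ≠ ∞)
    (hν : ∫⁻ x, ∑' i, ENNReal.ofReal (d i) * ‖g i x‖ₑ ∂ν ≠ ∞)
    (hη₁ : ∫⁻ x, ∑' i, ENNReal.ofReal (d i) * ‖g i x‖ₑ ∂η₁ ≠ ∞)
    (hη₂ : ∫⁻ x, ∑' i, ENNReal.ofReal (d i) * ‖g i x‖ₑ ∂η₂ ≠ ∞)
    (h : ∀ i, g i = f i ∨ (g i = 0 ∧ ∀ t : ℝ≥0, 0 < t →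
      sIntegral ((μ + t • η₁).toSignedMeasure - (ν + t • η₂).toSignedMeasure) (f i) = 0)) :
    ENNReal.ofReal (N (μ.toSignedMeasure - ν.toSignedMeasure)) ≤
      ∑' i, ENNReal.ofReal (d i) * ‖∫ x, g i x ∂μ - ∫ x, g i x ∂ν‖ₑ := by
  refine ENNReal.le_of_forall_add_mul_le
    (z := ∫⁻ x, ∑' i, ENNReal.ofReal (d i) * ‖g i x‖ₑ ∂η₁
      + ∫⁻ x, ∑' i, ENNReal.ofReal (d i) * ‖g i x‖ₑ ∂η₂
      + ENNReal.ofReal (N (η₁.toSignedMeasure - η₂.toSignedMeasure)))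
    (by simp [hη₁, hη₂]) fun t ht => ?_
  set A := (μ + t • η₁).toSignedMeasure - (ν + t • η₂).toSignedMeasure with hA
  have h1 : μ.toSignedMeasure - ν.toSignedMeasure =
      A + (-(t : ℝ)) • (η₁.toSignedMeasure - η₂.toSignedMeasure) := by
    rw [hA, Measure.toSignedMeasure_add, Measure.toSignedMeasure_add,
      Measure.toSignedMeasure_smul, Measure.toSignedMeasure_smul, NNReal.smul_def, NNReal.smul_def]
    module
  have h2 : ENNReal.ofReal (N (μ.toSignedMeasure - ν.toSignedMeasure)) ≤
      ENNReal.ofReal (N A) +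
        t * ENNReal.ofReal (N (η₁.toSignedMeasure - η₂.toSignedMeasure)) := by
    have : (t : ℝ≥0∞) = ENNReal.ofReal t := by simp
    rw [this, ← ENNReal.ofReal_mul (by positivity),
      ← ENNReal.ofReal_add (seminorm_nonneg hN_smul hN_add _)
        (mul_nonneg (by positivity) (seminorm_nonneg hN_smul hN_add _))]
    apply ENNReal.ofReal_le_ofReal
    rw [h1]
    refine (hN_add _ _).trans ?_
    rw [hN_smul, abs_neg, abs_of_nonneg (by positivity : (0 : ℝ) ≤ t)]
  have h3 : ENNReal.ofReal (N A) ≤ ∑' i, ENNReal.ofReal (d i) * ‖sIntegral A (f i)‖ₑ := by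
    refine (ENNReal.ofReal_le_ofReal (hNle A)).trans ?_
    refine (ENNReal.ofReal_tsum_le _ fun i => mul_nonneg (hd i).le (abs_nonneg _)).trans ?_
    refine ENNReal.tsum_le_tsum fun i => ?_
    rw [ENNReal.ofReal_mul (hd i).le, Real.enorm_eq_ofReal_abs]
  have h4 : ∀ i, ‖sIntegral A (f i)‖ₑ ≤ ‖∫ x, g i x ∂μ - ∫ x, g i x ∂ν‖ₑ +
      t * (∫⁻ x, ‖g i x‖ₑ ∂η₁ + ∫⁻ x, ‖g i x‖ₑ ∂η₂) := by
    intro i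
    rcases h i with hi | ⟨-, hi⟩
    · have i1 := integrable_of_lintegral_tsum_ne_top hd hg hμ i
      have i2 := integrable_of_lintegral_tsum_ne_top hd hg hν i
      have i3 := integrable_of_lintegral_tsum_ne_top hd hg hη₁ i
      have i4 := integrable_of_lintegral_tsum_ne_top hd hg hη₂ i
      have i3' : Integrable (g i) (t • η₁) := i3.smul_measure_nnreal
      have i4' : Integrable (g i) (t • η₂) := i4.smul_measure_nnreal
      rw [← hi, hA, sIntegral_sub_of_integrable _ _ (i1.add_measure i3') (i2.add_measure i4'),
        integral_add_measure i1 i3', integral_add_measure i2 i4', integral_smul_nnreal_measure,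
        integral_smul_nnreal_measure, NNReal.smul_def, NNReal.smul_def]
      have e : ∫ x, g i x ∂μ + (t : ℝ) • ∫ x, g i x ∂η₁ -
          (∫ x, g i x ∂ν + (t : ℝ) • ∫ x, g i x ∂η₂) =
          (∫ x, g i x ∂μ - ∫ x, g i x ∂ν) +
            (t : ℝ) * (∫ x, g i x ∂η₁ - ∫ x, g i x ∂η₂) := by
        simp only [smul_eq_mul]; ring
      rw [e]
      refine (enorm_add_le _ _).trans ?_
      rw [enorm_mul]
      gcongr
      · simp
      · exact (enorm_sub_le).trans (add_le_add (enorm_integral_le_lintegral_enorm _)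
          (enorm_integral_le_lintegral_enorm _))
    · rw [hi t ht]; simp
  refine h2.trans ((add_le_add_left (h3.trans
    (ENNReal.tsum_le_tsum fun i => mul_le_mul_right (h4 i) _)) _).trans ?_)
  rw [lintegral_tsum fun i => ((hg i).enorm.const_mul _).aemeasurable,
    lintegral_tsum fun i => ((hg i).enorm.const_mul _).aemeasurable]
  simp_rw [lintegral_const_mul _ (hg _).enorm, mul_add, ENNReal.tsum_add, mul_left_comm _ (t : ℝ≥0∞),
    ENNReal.tsum_mul_left]
  rw [add_assoc]

end Elimination

section Perturbation

theorem exists_seq_of_forall_finset {α : Type*} (p : ℕ → α → Prop) (r : ℕ → α → α → Prop)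
    (h : ∀ (n : ℕ) (s : Finset α), ∃ y, p n y ∧ ∀ x ∈ s, r n x y) :
    ∃ x : ℕ → α, (∀ n, p n (x n)) ∧ ∀ m n, m < n → r n (x m) (x n) := by
  classical
  choose φ hp hr using h
  let S : ℕ → Finset α := fun n => Nat.rec ∅ (fun k s => insert (φ k s) s) n
  have hS : ∀ n, S (n + 1) = insert (φ n (S n)) (S n) := fun n => rfl
  refine ⟨fun n => φ n (S n), fun n => hp _ _, fun m n hmn => hr _ _ _ ?_⟩
  induction n, hmn using Nat.le_induction with
  | base => simp [hS]
  | succ k _ ih => rw [hS]; exact Finset.mem_insert_of_mem ih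

variable {E : Type*} [MeasurableSpace E] {κ : Type*} [Countable κ] [Nonempty κ]

theorem exists_perturbing_measures {f : κ → E → ℝ} (hf : ∀ i, Measurable (f i))
    {G : E → ℝ≥0∞} (hG : Measurable G)
    (hu : ∀ (i : κ) (R : ℝ≥0), ∃ x, (R : ℝ≥0∞) < ‖f i x‖ₑ / (1 + G x)) (R : κ → ℝ≥0) :
    ∃ (η : Fin 2 → Measure E) (H : Set E), (∀ q, IsFiniteMeasure (η q)) ∧ MeasurableSet H ∧
      η 0 Hᶜ = 0 ∧ η 1 H = 0 ∧ (∀ q, ∫⁻ x, G x ∂(η q) ≠ ∞) ∧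
      (∀ q i, ∫⁻ x, ‖f i x‖ₑ ∂(η q) = ∞) ∧
      ∀ q, η q {x | ∀ i, ‖f i x‖ₑ / (1 + G x) ≤ R i} = 0 := by
  obtain ⟨e₀, he₀⟩ := exists_surjective_nat κ
  set e : ℕ → κ := fun n => e₀ (Nat.unpair (n / 2)).1 with he
  set u : κ → E → ℝ≥0∞ := fun i x => ‖f i x‖ₑ / (1 + G x) with hu_def
  have hum : ∀ i, Measurable (u i) := fun i => (hf i).enorm.div (hG.const_add 1)
  have hufin : ∀ i x, u i x ≠ ∞ := fun i x => (ENNReal.div_lt_top enorm_ne_top (by simp)).ne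
  obtain ⟨x, hx1, hx2⟩ := exists_seq_of_forall_finset
    (fun n y => (2 : ℝ≥0∞) ^ n < u (e n) y ∧ (R (e n) : ℝ≥0∞) < u (e n) y)
    (fun n z y => u (e n) z < u (e n) y) (by
      intro n s
      obtain ⟨y, hy⟩ := hu (e n) (2 ^ n + R (e n) + ∑ z ∈ s, (u (e n) z).toNNReal)
      push_cast at hy
      refine ⟨y, ⟨lt_of_le_of_lt ?_ hy, lt_of_le_of_lt ?_ hy⟩,
        fun z hz => lt_of_le_of_lt ?_ hy⟩
      · rw [add_assoc]; exact le_self_add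
      · rw [add_comm ((2 : ℝ≥0∞) ^ n), add_assoc]; exact le_self_add
      · refine le_trans ?_ le_add_self
        rw [← ENNReal.coe_toNNReal (hufin (e n) z)]
        exact Finset.single_le_sum (f := fun z => ((u (e n) z).toNNReal : ℝ≥0∞))
          (fun _ _ => zero_le) hz)
  set w : ℕ → ℝ≥0∞ := fun n => (2⁻¹ : ℝ≥0∞) ^ n / (1 + G (x n)) with hw
  set η : Fin 2 → Measure E := fun q =>
    Measure.sum fun k : ℕ => w (2 * k + q) • Measure.dirac (x (2 * k + q)) with hη
  have hmean : ∀ q (g : E → ℝ≥0∞), Measurable g →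
      ∫⁻ y, g y ∂(η q) = ∑' k : ℕ, w (2 * k + q) * g (x (2 * k + q)) := by
    intro q g hg
    simp only [hη, lintegral_sum_measure, lintegral_smul_measure, lintegral_dirac' _ hg,
      smul_eq_mul]
  have hgeom : ∀ q : Fin 2, ∑' k : ℕ, (2⁻¹ : ℝ≥0∞) ^ (2 * k + (q : ℕ)) ≠ ∞ := by
    intro q
    refine ne_top_of_le_ne_top (b := ∑' n : ℕ, (2⁻¹ : ℝ≥0∞) ^ n) ?_
      (ENNReal.tsum_comp_le_tsum_of_injective (f := fun k : ℕ => 2 * k + (q : ℕ)) ?_ _)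
    · rw [ENNReal.tsum_geometric]; simp
    · intro a b hab; simp only at hab; omega
  have hle : ∀ q (g : E → ℝ≥0∞), Measurable g → (∀ y, g y ≤ 1 + G y) →
      ∫⁻ y, g y ∂(η q) ≠ ∞ := by
    intro q g hg hg1
    rw [hmean q g hg]
    refine ne_top_of_le_ne_top (hgeom q) (ENNReal.tsum_le_tsum fun k => ?_)
    simp only [hw]
    refine (mul_le_mul_right (hg1 _) _).trans ?_
    rw [mul_comm]
    exact ENNReal.mul_div_le
  have hzero : ∀ (q : Fin 2) (S : Set E), MeasurableSet S → (∀ k : ℕ, x (2 * k + q) ∉ S) →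
      η q S = 0 := by
    intro q S hS hxS
    rw [← lintegral_indicator_one hS, hmean q _ (measurable_one.indicator hS)]
    simp [hxS]
  set H : Set E := {y | ∃ k : ℕ, ∀ j, u (e j) y = u (e j) (x (2 * k))} with hH
  have hHm : MeasurableSet H := by
    have : H = ⋃ k : ℕ, ⋂ j, u (e j) ⁻¹' {u (e j) (x (2 * k))} := by
      ext y; simp [hH]
    rw [this]
    exact MeasurableSet.iUnion fun k => MeasurableSet.iInter fun j =>
      hum _ (measurableSet_singleton _)
  refine ⟨η, H, fun q => ⟨?_⟩, hHm, ?_, ?_, fun q => hle q G hG fun y => le_add_self, ?_, ?_⟩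
  · have := hle q (fun _ => 1) measurable_const fun y => le_self_add
    simpa [lt_top_iff_ne_top] using this
  · exact hzero 0 _ hHm.compl fun k hk => hk ⟨k, fun j => by simp⟩
  · refine hzero 1 _ hHm fun k ⟨l, hl⟩ => ?_
    rcases lt_or_gt_of_ne (show 2 * k + ((1 : Fin 2) : ℕ) ≠ 2 * l by simp; omega) with h | h
    · exact (hx2 _ _ h).ne (hl (2 * l))
    · exact (hx2 _ _ h).ne' (hl (2 * k + ((1 : Fin 2) : ℕ)))
  · intro q i
    rw [hmean q _ (hf i).enorm]
    obtain ⟨a, rfl⟩ := he₀ i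
    rw [eq_top_iff, ← ENNReal.tsum_const_eq_top_of_ne_zero (α := ℕ) (c := 1) one_ne_zero]
    refine le_trans (ENNReal.tsum_le_tsum fun b => ?_)
      (ENNReal.tsum_comp_le_tsum_of_injective (f := fun b : ℕ => Nat.pair a b) ?_ _)
    · set n := 2 * Nat.pair a b + (q : ℕ) with hn
      have hen : e n = e₀ a := by
        have : n / 2 = Nat.pair a b := by omega
        simp [he, this]
      have h1 := (hx1 n).1.le
      rw [hen] at h1
      calc (1 : ℝ≥0∞) = (2⁻¹) ^ n * 2 ^ n := by
            rw [← mul_pow, ENNReal.inv_mul_cancel (by simp) (by simp), one_pow]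
        _ ≤ (2⁻¹) ^ n * u (e₀ a) (x n) := by gcongr
        _ = w n * ‖f (e₀ a) (x n)‖ₑ := by
            simp only [hw, hu_def, div_eq_mul_inv]; ring
    · intro b c hbc
      simpa using hbc
  · intro q
    refine hzero q _ ?_ fun k hk => ?_
    · have : {y | ∀ i, u i y ≤ R i} = ⋂ i, u i ⁻¹' Set.Iic (R i : ℝ≥0∞) := by ext y; simp
      exact this ▸ MeasurableSet.iInter fun i => hum i measurableSet_Iic
    · exact absurd (hk (e (2 * k + q))) (not_le.2 (hx1 _).2)

end Perturbation

section Domination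

variable {E : Type*} [MeasurableSpace E]

theorem sIntegral_sub_eq_zero {μ ν : Measure E} [IsFiniteMeasure μ] [IsFiniteMeasure ν]
    {f : E → ℝ} {S T : Set E} (hS : MeasurableSet S) (hT : MeasurableSet T)
    (hνS : ν S = 0) (hμT : μ T = 0) (hμ : ∫⁻ x in S, ‖f x‖ₑ ∂μ = ∞)
    (hν : ∫⁻ x in T, ‖f x‖ₑ ∂ν = ∞) :
    sIntegral (μ.toSignedMeasure - ν.toSignedMeasure) f = 0 := by
  rw [sIntegral_toSignedMeasure_sub,
    integral_eq_zero_of_lintegral_enorm_eq_top (lintegral_sub_eq_top hS hνS hμ),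
    integral_eq_zero_of_lintegral_enorm_eq_top (lintegral_sub_eq_top hT hμT hν), sub_zero]

theorem setLIntegral_add_smul_eq_top {μ η : Measure E} {g : E → ℝ≥0∞} {S : Set E} {t : ℝ≥0}
    (ht : 0 < t) (hS : η Sᶜ = 0) (hη : ∫⁻ x, g x ∂η = ∞) :
    ∫⁻ x in S, g x ∂(μ + t • η) = ∞ := by
  have h : η.restrict S = η := Measure.restrict_eq_self_of_ae_mem (mem_ae_iff.2 hS)
  rw [Measure.restrict_add, lintegral_add_measure, Measure.restrict_smul, h,
    lintegral_smul_measure, hη, ENNReal.smul_def, smul_eq_mul,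
    ENNReal.mul_top (by simpa using ht.ne'), add_top]

theorem exists_threshold_lintegral_le {μ : Measure E} {G u : E → ℝ≥0∞}
    (hu : Measurable u) (hufin : ∀ x, u x ≠ ∞) (hG : ∫⁻ x, G x ∂μ ≠ ∞) [IsFiniteMeasure μ]
    {ε : ℝ≥0∞} (hε : ε ≠ 0) : ∃ R : ℝ≥0, ∫⁻ x in {x | (R : ℝ≥0∞) < u x}, G x ∂μ ≤ ε := by
  have h1 : Tendsto (fun n : ℕ => μ {x | ((n : ℝ≥0) : ℝ≥0∞) < u x}) atTop (nhds 0) := by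
    have h2 : (⋂ n : ℕ, {x | ((n : ℝ≥0) : ℝ≥0∞) < u x}) = ∅ := by
      ext x
      simp only [Set.mem_iInter, Set.mem_ofPred_eq, Set.mem_empty_iff_false, iff_false, not_forall,
        not_lt]
      obtain ⟨n, hn⟩ := ENNReal.exists_nat_gt (hufin x)
      exact ⟨n, by simpa using hn.le⟩
    rw [← measure_empty (μ := μ), ← h2]
    refine tendsto_measure_iInter_atTop (fun n => (measurableSet_lt measurable_const hu).nullMeasurableSet)
      (fun m n hmn x hx => ?_) ⟨0, measure_ne_top _ _⟩
    simp only [Set.mem_ofPred_eq] at hx ⊢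
    exact lt_of_le_of_lt (by exact_mod_cast hmn) hx
  have h3 := tendsto_setLIntegral_zero hG h1
  obtain ⟨n, hn⟩ := (h3.eventually (ge_mem_nhds (pos_iff_ne_zero.2 hε))).exists
  exact ⟨n, hn⟩

variable {ι : Type*} [Countable ι]

theorem seminorm_sub_le_tsum {N : SignedMeasure E → ℝ}
    (hN_smul : ∀ (a : ℝ) (ν : SignedMeasure E), N (a • ν) = |a| * N ν)
    (hN_add : ∀ ν₁ ν₂ : SignedMeasure E, N (ν₁ + ν₂) ≤ N ν₁ + N ν₂)
    {d : ι → ℝ} (hd : ∀ i, 0 < d i) {f g : ι → E → ℝ}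
    (hNle : ∀ ν : SignedMeasure E, N ν ≤ ∑' i, d i * |sIntegral ν (f i)|)
    (hf : ∀ i, Measurable (f i)) (hg : ∀ i, Measurable (g i))
    (hfg : ∀ i, g i = f i ∨ (g i = 0 ∧ ∀ R : ℝ≥0, ∃ x,
      (R : ℝ≥0∞) < ‖f i x‖ₑ / (1 + ∑' j, ENNReal.ofReal (d j) * ‖g j x‖ₑ)))
    (μ ν : Measure E) [IsFiniteMeasure μ] [IsFiniteMeasure ν]
    (hμ : ∫⁻ x, ∑' i, ENNReal.ofReal (d i) * ‖g i x‖ₑ ∂μ ≠ ∞)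
    (hν : ∫⁻ x, ∑' i, ENNReal.ofReal (d i) * ‖g i x‖ₑ ∂ν ≠ ∞) :
    ENNReal.ofReal (N (μ.toSignedMeasure - ν.toSignedMeasure)) ≤
      ∑' i, ENNReal.ofReal (d i) * ‖∫ x, g i x ∂μ - ∫ x, g i x ∂ν‖ₑ := by
  set G : E → ℝ≥0∞ := fun x => ∑' i, ENNReal.ofReal (d i) * ‖g i x‖ₑ with hGdef
  have hGm : Measurable G := Measurable.tsum fun i => (hg i).enorm.const_mul _
  by_cases hall : ∀ i, g i = f i
  · exact seminorm_sub_le_of_perturbation hN_smul hN_add hd hNle hg μ ν 0 0 hμ hν (by simp)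
      (by simp) fun i => Or.inl (hall i)
  let κ := {i // g i ≠ f i}
  have hne : Nonempty κ := by
    obtain ⟨i, hi⟩ := not_forall.1 hall
    exact ⟨⟨i, hi⟩⟩
  have hbad : ∀ i : κ, g i = 0 ∧ ∀ R : ℝ≥0, ∃ x, (R : ℝ≥0∞) < ‖f i x‖ₑ / (1 + G x) :=
    fun i => (hfg i).resolve_left i.2
  set u : κ → E → ℝ≥0∞ := fun i x => ‖f i x‖ₑ / (1 + G x) with hu_def
  have hum : ∀ i, Measurable (u i) := fun i => (hf i).enorm.div (hGm.const_add 1)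
  have hufin : ∀ i x, u i x ≠ ∞ := fun i x => (ENNReal.div_lt_top enorm_ne_top (by simp)).ne
  refine ENNReal.le_of_forall_add_mul_le (z := 2) (by simp) fun ε hε => ?_
  obtain ⟨δ, hδ0, hδ⟩ := ENNReal.exists_pos_sum_of_countable
    (ENNReal.coe_ne_zero.2 hε.ne') κ
  have hsum : ∫⁻ x, G x ∂(μ + ν) ≠ ∞ := by
    rw [lintegral_add_measure]; exact ENNReal.add_ne_top.2 ⟨hμ, hν⟩
  have hR : ∀ i : κ, ∃ R : ℝ≥0, ∫⁻ x in {x | (R : ℝ≥0∞) < u i x}, G x ∂(μ + ν) ≤ δ i :=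
    fun i => exists_threshold_lintegral_le (hum i) (hufin i) hsum
      (ENNReal.coe_ne_zero.2 (hδ0 i).ne')
  choose R hR using hR
  obtain ⟨η, H, hηfin, hH, hη0, hη1, hηG, hηtop, hηA⟩ :=
    exists_perturbing_measures (fun i : κ => hf i) hGm (fun i => (hbad i).2) R
  set A : Set E := {x | ∀ i, u i x ≤ R i} with hA
  have hAm : MeasurableSet A := by
    have : A = ⋂ i, u i ⁻¹' Set.Iic (R i : ℝ≥0∞) := by ext y; simp [hA]
    exact this ▸ MeasurableSet.iInter fun i => hum i measurableSet_Iic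
  have hAc : ∫⁻ x in Aᶜ, G x ∂(μ + ν) ≤ ε := by
    have : Aᶜ = ⋃ i, {x | (R i : ℝ≥0∞) < u i x} := by ext y; simp [hA]
    rw [this]
    exact (lintegral_iUnion_le _ _).trans ((ENNReal.tsum_le_tsum hR).trans hδ.le)
  have hAc' : ∫⁻ x in Aᶜ, G x ∂μ + ∫⁻ x in Aᶜ, G x ∂ν ≤ ε := by
    rwa [Measure.restrict_add, lintegral_add_measure] at hAc
  have hrestr : ∀ (m : Measure E) (S : Set E), ∫⁻ x, G x ∂m ≠ ∞ → ∫⁻ x in S, G x ∂m ≠ ∞ :=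
    fun m S h => ne_top_of_le_ne_top h (lintegral_mono' Measure.restrict_le_self le_rfl)
  have hpos : ∀ (m : Measure E) [IsFiniteMeasure m], ∫⁻ x, G x ∂m ≠ ∞ →
      ENNReal.ofReal (N m.toSignedMeasure) ≤ ∫⁻ x, G x ∂m := by
    intro m _ hm
    have h1 := seminorm_sub_le_of_perturbation hN_smul hN_add hd hNle hg m 0 (η 0) 0 hm
      (by simp) (hηG 0) (by simp) fun i => by
        by_cases hi : g i = f i
        · exact Or.inl hi
        · refine Or.inr ⟨(hbad ⟨i, hi⟩).1, fun t ht => ?_⟩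
          rw [sIntegral_toSignedMeasure_sub, integral_eq_zero_of_lintegral_enorm_eq_top
            (lintegral_sub_eq_top MeasurableSet.univ (by simp)
              (setLIntegral_add_smul_eq_top ht (by simp) (hηtop 0 ⟨i, hi⟩)))]
          simp [Measure.zero_sub]
    rw [Measure.toSignedMeasure_zero, sub_zero] at h1
    refine h1.trans ?_
    rw [hGdef, lintegral_tsum fun i => ((hg i).enorm.const_mul _).aemeasurable]
    refine ENNReal.tsum_le_tsum fun i => ?_
    rw [lintegral_const_mul _ (hg i).enorm, integral_zero_measure, sub_zero]
    exact mul_le_mul_right (enorm_integral_le_lintegral_enorm _) _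
  have hmain := seminorm_sub_le_of_perturbation hN_smul hN_add hd hNle hg
    (μ.restrict A) (ν.restrict A) (η 0) (η 1) (hrestr _ _ hμ) (hrestr _ _ hν) (hηG 0) (hηG 1)
    fun i => by
      by_cases hi : g i = f i
      · exact Or.inl hi
      · refine Or.inr ⟨(hbad ⟨i, hi⟩).1, fun t ht => ?_⟩
        have hnull : ∀ (m : Measure E) (S : Set E), m.restrict A (Aᶜ ∩ S) = 0 := by
          intro m S
          refine measure_mono_null Set.inter_subset_left ?_
          rw [Measure.restrict_apply hAm.compl, Set.compl_inter_self, measure_empty]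
        refine sIntegral_sub_eq_zero (hAm.compl.inter hH) (hAm.compl.inter hH.compl) ?_ ?_
          (setLIntegral_add_smul_eq_top ht ?_ (hηtop 0 ⟨i, hi⟩))
          (setLIntegral_add_smul_eq_top ht ?_ (hηtop 1 ⟨i, hi⟩))
        · rw [Measure.add_apply, hnull, Measure.smul_apply,
            measure_mono_null Set.inter_subset_right hη1, smul_zero, add_zero]
        · rw [Measure.add_apply, hnull, Measure.smul_apply,
            measure_mono_null Set.inter_subset_right hη0, smul_zero, add_zero]
        · rw [Set.compl_inter, compl_compl]
          exact measure_union_null (hηA 0) hη0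
        · rw [Set.compl_inter, compl_compl, compl_compl]
          exact measure_union_null (hηA 1) hη1
  have hsplit : ∀ (m : Measure E) [IsFiniteMeasure m], m.toSignedMeasure =
      (m.restrict A).toSignedMeasure + (m.restrict Aᶜ).toSignedMeasure := by
    intro m _
    rw [← Measure.toSignedMeasure_add]
    exact Measure.toSignedMeasure_congr (Measure.restrict_add_restrict_compl hAm).symm
  have hN1 : N (μ.toSignedMeasure - ν.toSignedMeasure) ≤
      N ((μ.restrict A).toSignedMeasure - (ν.restrict A).toSignedMeasure) +
        (N (μ.restrict Aᶜ).toSignedMeasure + N (ν.restrict Aᶜ).toSignedMeasure) := by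
    have : μ.toSignedMeasure - ν.toSignedMeasure =
        ((μ.restrict A).toSignedMeasure - (ν.restrict A).toSignedMeasure) +
          ((μ.restrict Aᶜ).toSignedMeasure + -(ν.restrict Aᶜ).toSignedMeasure) := by
      rw [hsplit μ, hsplit ν]; abel
    rw [this]
    refine (hN_add _ _).trans (add_le_add_right ((hN_add _ _).trans ?_) _)
    rw [seminorm_neg (N := N) hN_smul]
  have hN2 : ENNReal.ofReal (N (μ.restrict Aᶜ).toSignedMeasure + N (ν.restrict Aᶜ).toSignedMeasure)
      ≤ ε :=
    ENNReal.ofReal_add_le.trans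
      ((add_le_add (hpos _ (hrestr _ _ hμ)) (hpos _ (hrestr _ _ hν))).trans hAc')
  have hterm : ∀ i, ‖∫ x, g i x ∂(μ.restrict A) - ∫ x, g i x ∂(ν.restrict A)‖ₑ ≤
      ‖∫ x, g i x ∂μ - ∫ x, g i x ∂ν‖ₑ +
        (∫⁻ x in Aᶜ, ‖g i x‖ₑ ∂μ + ∫⁻ x in Aᶜ, ‖g i x‖ₑ ∂ν) := by
    intro i
    have i1 := integral_add_compl hAm (integrable_of_lintegral_tsum_ne_top hd hg hμ i)
    have i2 := integral_add_compl hAm (integrable_of_lintegral_tsum_ne_top hd hg hν i)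
    have : ∫ x, g i x ∂(μ.restrict A) - ∫ x, g i x ∂(ν.restrict A) =
        (∫ x, g i x ∂μ - ∫ x, g i x ∂ν) + (-(∫ x in Aᶜ, g i x ∂μ) + ∫ x in Aᶜ, g i x ∂ν) := by
      rw [← i1, ← i2]; ring
    rw [this]
    refine (enorm_add_le _ _).trans (add_le_add_right ((enorm_add_le _ _).trans ?_) _)
    rw [enorm_neg]
    exact add_le_add (enorm_integral_le_lintegral_enorm _) (enorm_integral_le_lintegral_enorm _)
  have hmain' := hmain.trans (ENNReal.tsum_le_tsum fun i => mul_le_mul_right (hterm i) _)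
  simp_rw [mul_add, ENNReal.tsum_add, ← lintegral_const_mul _ (hg _).enorm] at hmain'
  rw [← lintegral_tsum fun i => ((hg i).enorm.const_mul _).aemeasurable,
    ← lintegral_tsum fun i => ((hg i).enorm.const_mul _).aemeasurable] at hmain'
  calc ENNReal.ofReal (N (μ.toSignedMeasure - ν.toSignedMeasure))
      ≤ _ := (ENNReal.ofReal_le_ofReal hN1).trans ENNReal.ofReal_add_le
    _ ≤ _ := add_le_add (hmain'.trans (add_le_add_right hAc' _)) hN2
    _ = _ := by rw [add_assoc, ← two_mul, mul_comm (2 : ℝ≥0∞)]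

end Domination

section SecondMoment

theorem lintegral_tsum_sq_le {α ι : Type*} {mα : MeasurableSpace α} {μ : Measure α} [Countable ι]
    {u : ι → α → ℝ≥0∞} (hu : ∀ i, AEMeasurable (u i) μ) {c : ι → ℝ≥0∞}
    (h : ∀ i, ∫⁻ x, u i x ^ 2 ∂μ ≤ c i ^ 2) :
    ∫⁻ x, (∑' i, u i x) ^ 2 ∂μ ≤ (∑' i, c i) ^ 2 := by
  have hL2 : ∀ i, (∫⁻ x, u i x ^ (2 : ℝ) ∂μ) ^ (1 / (2 : ℝ)) ≤ c i := by
    intro i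
    have h1 : (∫⁻ x, u i x ^ (2 : ℝ) ∂μ) ≤ c i ^ (2 : ℝ) := by
      simpa only [ENNReal.rpow_two] using h i
    refine (ENNReal.rpow_le_rpow h1 (by norm_num)).trans_eq ?_
    rw [← ENNReal.rpow_mul]; norm_num
  simp_rw [sq, ← ENNReal.tsum_mul_left, ← ENNReal.tsum_mul_right]
  have hm : ∀ i j, AEMeasurable (fun x => u j x * u i x) μ := fun i j => (hu j).mul (hu i)
  rw [lintegral_tsum fun i => AEMeasurable.tsum fun j => hm _ _]
  refine ENNReal.tsum_le_tsum fun i => ?_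
  rw [lintegral_tsum fun j => hm _ _]
  refine ENNReal.tsum_le_tsum fun j => ?_
  refine (ENNReal.lintegral_mul_le_Lp_mul_Lq μ Real.HolderConjugate.two_two (hu j) (hu i)).trans ?_
  exact mul_le_mul' (hL2 j) (hL2 i)

theorem lintegral_finset_sum_sq_le {α ι : Type*} {mα : MeasurableSpace α} {μ : Measure α}
    (s : Finset ι) {u : ι → α → ℝ≥0∞} (hu : ∀ i ∈ s, AEMeasurable (u i) μ) {c : ι → ℝ≥0∞}
    (h : ∀ i ∈ s, ∫⁻ x, u i x ^ 2 ∂μ ≤ c i ^ 2) :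
    ∫⁻ x, (∑ i ∈ s, u i x) ^ 2 ∂μ ≤ (∑ i ∈ s, c i) ^ 2 := by
  have := lintegral_tsum_sq_le (μ := μ) (ι := s) (u := fun i => u i) (c := fun i => c i)
    (fun i => hu i i.2) (fun i => h i i.2)
  have e : ∀ x, ∑' i : s, u i x = ∑ i ∈ s, u i x := fun x => Finset.tsum_subtype s fun i => u i x
  rw [Finset.tsum_subtype s fun i => c i] at this
  simpa only [e] using this

theorem sum_range_rpow_neg_le {s : ℝ} (hs0 : 0 ≤ s) (hs1 : s < 1) (l : ℕ) :
    ∑ m ∈ Finset.range l, ((m + 1 : ℕ) : ℝ) ^ (-s) ≤ (l : ℝ) ^ (1 - s) / (1 - s) := by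
  have hs : 0 < 1 - s := by linarith
  induction l with
  | zero => simp; positivity
  | succ l ih =>
    rw [Finset.sum_range_succ]
    refine (add_le_add_left ih _).trans ?_
    have hl : (0 : ℝ) < (l + 1 : ℕ) := by positivity
    have h1 : ((l : ℝ) / (l + 1 : ℕ)) ^ (1 - s) ≤ 1 - (1 - s) / (l + 1 : ℕ) := by
      have h2 := rpow_one_add_le_one_add_mul_self (s := -1 / ((l + 1 : ℕ) : ℝ)) (p := 1 - s)
        (by rw [le_div_iff₀ hl]; push_cast; linarith [(Nat.cast_nonneg l : (0 : ℝ) ≤ l)])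
        hs.le (by linarith)
      have h3 : 1 + -1 / ((l + 1 : ℕ) : ℝ) = (l : ℝ) / (l + 1 : ℕ) := by
        field_simp; push_cast; ring
      rw [h3] at h2
      refine h2.trans_eq ?_
      ring
    rw [Real.div_rpow (by positivity) hl.le, div_le_iff₀ (by positivity)] at h1
    have h4 : ((l + 1 : ℕ) : ℝ) ^ (1 - s) = (l + 1 : ℕ) * ((l + 1 : ℕ) : ℝ) ^ (-s) := by
      rw [sub_eq_add_neg, Real.rpow_add hl, Real.rpow_one]
    rw [le_div_iff₀ hs, add_mul, div_mul_cancel₀ _ hs.ne']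
    have h5 : (1 - (1 - s) / ((l + 1 : ℕ) : ℝ)) * ((l + 1 : ℕ) : ℝ) ^ (1 - s) =
        ((l + 1 : ℕ) : ℝ) ^ (1 - s) - (1 - s) * ((l + 1 : ℕ) : ℝ) ^ (-s) := by
      rw [sub_mul, one_mul, div_mul_eq_mul_div, h4]
      field_simp
    rw [h5] at h1
    linarith

variable {Ω : Type*} [MeasurableSpace Ω] {ℙ : Measure Ω}

theorem integral_sum_sq_le_of_decay {C s v : ℝ} (hC : 0 ≤ C) (hs0 : 0 ≤ s) (hs1 : s < 1)
    (hv : 0 ≤ v) {Y : ℕ → Ω → ℝ} {L : ℕ} (hY : ∀ j < L, MemLp (Y j) 2 ℙ)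
    (hvar : ∀ j < L, ∫ ω, Y j ω ^ 2 ∂ℙ ≤ v)
    (hcov : ∀ j m, j + (m + 1) < L →
      ∫ ω, Y j ω * Y (j + (m + 1)) ω ∂ℙ ≤ C * ((m + 1 : ℕ) : ℝ) ^ (-s) * v)
    {l : ℕ} (hl : l ≤ L) :
    ∫ ω, (∑ j ∈ Finset.range l, Y j ω) ^ 2 ∂ℙ ≤
      v * (1 + 2 * C / (1 - s)) * (l * (l : ℝ) ^ (1 - s)) := by
  have hs : 0 < 1 - s := by linarith
  induction l with
  | zero => simp
  | succ l ih =>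
    have hlL : l < L := hl
    have hS : MemLp (fun ω => ∑ j ∈ Finset.range l, Y j ω) 2 ℙ :=
      memLp_finsetSum _ fun j hj => hY j ((Finset.mem_range.1 hj).trans hlL)
    have i1 := hS.integrable_sq
    have i2 : Integrable (fun ω => (∑ j ∈ Finset.range l, Y j ω) * Y l ω) ℙ :=
      hS.integrable_mul (hY l hlL)
    have i12 : Integrable (fun ω => (∑ j ∈ Finset.range l, Y j ω) ^ 2 +
        2 * ((∑ j ∈ Finset.range l, Y j ω) * Y l ω)) ℙ := i1.add (i2.const_mul 2)
    have i4 : ∀ j ∈ Finset.range l, Integrable (fun ω => Y j ω * Y l ω) ℙ := fun j hj =>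
      (hY j ((Finset.mem_range.1 hj).trans hlL)).integrable_mul (hY l hlL)
    have i3 := (hY l hlL).integrable_sq
    have e1 : ∫ ω, (∑ j ∈ Finset.range (l + 1), Y j ω) ^ 2 ∂ℙ =
        ∫ ω, (∑ j ∈ Finset.range l, Y j ω) ^ 2 ∂ℙ +
          2 * ∫ ω, (∑ j ∈ Finset.range l, Y j ω) * Y l ω ∂ℙ + ∫ ω, Y l ω ^ 2 ∂ℙ := by
      rw [← integral_const_mul, ← integral_add i1 (i2.const_mul 2),
        ← integral_add i12 i3]
      refine integral_congr_ae (Eventually.of_forall fun ω => ?_)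
      simp only [Finset.sum_range_succ]
      ring
    have e2 : ∫ ω, (∑ j ∈ Finset.range l, Y j ω) * Y l ω ∂ℙ ≤ C * v * ((l : ℝ) ^ (1 - s) / (1 - s)) := by
      simp_rw [Finset.sum_mul]
      rw [integral_finsetSum _ i4]
      calc ∑ j ∈ Finset.range l, ∫ ω, Y j ω * Y l ω ∂ℙ
          ≤ ∑ j ∈ Finset.range l, C * v * ((l - 1 - j + 1 : ℕ) : ℝ) ^ (-s) := by
            refine Finset.sum_le_sum fun j hj => ?_
            have hj' := Finset.mem_range.1 hj
            have e : j + (l - 1 - j + 1) = l := by omega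
            have := hcov j (l - 1 - j) (by omega)
            rw [e] at this
            linarith
        _ = C * v * ∑ m ∈ Finset.range l, ((m + 1 : ℕ) : ℝ) ^ (-s) := by
            rw [← Finset.mul_sum,
              Finset.sum_range_reflect (fun m => ((m + 1 : ℕ) : ℝ) ^ (-s)) l]
        _ ≤ _ := mul_le_mul_of_nonneg_left (sum_range_rpow_neg_le hs0 hs1 l) (by positivity)
    have hmono : (l : ℝ) ^ (1 - s) ≤ ((l + 1 : ℕ) : ℝ) ^ (1 - s) :=
      Real.rpow_le_rpow (by positivity) (by push_cast; linarith) hs.le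
    have hone : 1 ≤ ((l + 1 : ℕ) : ℝ) ^ (1 - s) :=
      Real.one_le_rpow (by push_cast; linarith [(Nat.cast_nonneg l : (0 : ℝ) ≤ l)]) hs.le
    have h1 := ih hlL.le
    have h2 := hvar l hlL
    rw [e1]
    set K := 1 + 2 * C / (1 - s) with hK
    have hK0 : 0 ≤ v * K := by positivity
    set r := ((l + 1 : ℕ) : ℝ) ^ (1 - s)
    have h3 : v * K * (l * (l : ℝ) ^ (1 - s)) ≤ v * K * (l * r) := by gcongr
    have h4 : C * v * ((l : ℝ) ^ (1 - s) / (1 - s)) ≤ C * v * (r / (1 - s)) := by gcongr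
    have h5 : v ≤ v * r := le_mul_of_one_le_right hv hone
    have h6 : v * K * (((l + 1 : ℕ) : ℝ) * r) =
        v * K * (l * r) + 2 * (C * v * (r / (1 - s))) + v * r := by
      rw [hK]; push_cast; ring
    rw [h6]
    linarith

end SecondMoment

section WeightedContrast

variable {V : Type*} [AddCommGroup V] [Module ℝ V] {N : V → ℝ}

theorem seminorm_sub_le (hs : ∀ (a : ℝ) ν, N (a • ν) = |a| * N ν)
    (ha : ∀ ν₁ ν₂, N (ν₁ + ν₂) ≤ N ν₁ + N ν₂) (u v : V) : N (u - v) ≤ N u + N v := by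
  rw [sub_eq_add_neg]
  exact (ha _ _).trans_eq (by rw [seminorm_neg hs])

theorem weighted_contrast_lt (hs : ∀ (a : ℝ) ν, N (a • ν) = |a| * N ν)
    (ha : ∀ ν₁ ν₂, N (ν₁ + ν₂) ≤ N ν₁ + N ν₂) {g k κ n ε b : ℝ} (hg0 : 0 < g) (hg1 : g ≤ 1)
    (hk : 0 < k) (hkκ : k < κ) (hκn : κ < n)
    (hb : 2 * ε < g * (1 - κ / n) * (b - 2 * ε)) {s₁ s₂ s₃ p q : V}
    (h₁ : (k / κ) ^ g * (N (s₁ - k • p) / k) ≤ ε)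
    (h₂ : N (s₂ - (κ - k) • p) ≤ ε * (κ - k))
    (h₁₂ : N (s₁ + s₂ - κ • p) ≤ ε * κ)
    (h₃ : N (s₃ - (n - κ) • q) ≤ ε * (n - κ))
    (hpq : b ≤ N (p - q)) :
    (k / n * (1 - k / n)) ^ g * N (k⁻¹ • s₁ - (n - k)⁻¹ • (s₂ + s₃)) <
      (κ / n * (1 - κ / n)) ^ g * N (κ⁻¹ • (s₁ + s₂) - (n - κ)⁻¹ • s₃) := by
  have hκ : 0 < κ := hk.trans hkκ
  have hn : 0 < n := hκ.trans hκn
  have hkn : 0 < n - k := by linarith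
  have hκn' : 0 < n - κ := by linarith
  have hl : 0 < κ - k := by linarith
  have hN := seminorm_nonneg hs ha
  set Δ := κ⁻¹ • (s₁ + s₂) - (n - κ)⁻¹ • s₃ with hΔ
  have hΔb : b - 2 * ε ≤ N Δ := by
    have e : p - q = Δ - (κ⁻¹ • (s₁ + s₂ - κ • p) - (n - κ)⁻¹ • (s₃ - (n - κ) • q)) := by
      rw [hΔ]; match_scalars <;> field_simp <;> ring
    have e1 : N (κ⁻¹ • (s₁ + s₂ - κ • p)) ≤ ε := by
      rw [hs, abs_of_pos (inv_pos.2 hκ), inv_mul_le_iff₀ hκ]; linarith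
    have e2 : N ((n - κ)⁻¹ • (s₃ - (n - κ) • q)) ≤ ε := by
      rw [hs, abs_of_pos (inv_pos.2 hκn'), inv_mul_le_iff₀ hκn']; linarith
    have := seminorm_sub_le hs ha Δ (κ⁻¹ • (s₁ + s₂ - κ • p) - (n - κ)⁻¹ • (s₃ - (n - κ) • q))
    rw [← e] at this
    have := seminorm_sub_le hs ha (κ⁻¹ • (s₁ + s₂ - κ • p)) ((n - κ)⁻¹ • (s₃ - (n - κ) • q))
    linarith
  set x := k / κ with hx
  set y := (n - κ) / (n - k) with hy
  have hx0 : 0 < x := by positivity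
  have hy0 : 0 < y := by positivity
  have hx1 : x < 1 := (div_lt_one hκ).2 hkκ
  have hy1 : y ≤ 1 := (div_le_one hkn).2 (by linarith)
  set A := N (s₁ - k • p) / k with hA
  set T := N (s₂ - (κ - k) • p) / (κ - k) with hT
  have hT0 : 0 ≤ T := div_nonneg (hN _) hl.le
  have hA0 : 0 ≤ A := div_nonneg (hN _) hk.le
  have hTε : T ≤ ε := (div_le_iff₀ hl).2 h₂
  have hΔk : N (k⁻¹ • s₁ - (n - k)⁻¹ • (s₂ + s₃)) ≤
      y * N Δ + n * (1 - x) / (n - k) * (A + T) := by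
    have e : k⁻¹ • s₁ - (n - k)⁻¹ • (s₂ + s₃) = y • Δ + ((n * (1 - x) / (n - k)) •
        (k⁻¹ • (s₁ - k • p) - (κ - k)⁻¹ • (s₂ - (κ - k) • p))) := by
      rw [hΔ, hx, hy]; match_scalars <;> field_simp <;> ring
    rw [e]
    refine (ha _ _).trans ?_
    rw [hs, hs, abs_of_pos hy0, abs_of_nonneg
      (div_nonneg (mul_nonneg hn.le (by linarith)) hkn.le)]
    refine add_le_add le_rfl (mul_le_mul_of_nonneg_left ?_
      (div_nonneg (mul_nonneg hn.le (by linarith)) hkn.le))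
    refine (seminorm_sub_le hs ha _ _).trans_eq ?_
    rw [hs, hs, abs_of_pos (inv_pos.2 hk), abs_of_pos (inv_pos.2 hl), hA, hT]
    ring
  have hw0 : 0 < κ / n * (1 - κ / n) := by
    have : 0 < 1 - κ / n := by rw [sub_pos, div_lt_one hn]; exact hκn
    positivity
  have hw : k / n * (1 - k / n) = κ / n * (1 - κ / n) * (x / y) := by
    rw [hx, hy]; field_simp
  rw [hw, Real.mul_rpow hw0.le (by positivity), mul_assoc]
  refine mul_lt_mul_of_pos_left ?_ (Real.rpow_pos_of_pos hw0 g)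
  rw [Real.div_rpow hx0.le hy0.le]
  have hyg0 : 0 < y ^ g := Real.rpow_pos_of_pos hy0 g
  have hxg0 : 0 < x ^ g := Real.rpow_pos_of_pos hx0 g
  have hyg : y ≤ y ^ g := by
    simpa using Real.rpow_le_rpow_of_exponent_ge hy0 hy1 hg1
  have hxg1 : x ^ g ≤ 1 := Real.rpow_le_one hx0.le hx1.le hg0.le
  have hxg : x ^ g ≤ 1 - g * (1 - x) := by
    have := rpow_one_add_le_one_add_mul_self (s := x - 1) (p := g) (by linarith) hg0.le hg1
    rw [add_sub_cancel] at this
    linarith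
  have hΔ0 : 0 ≤ N Δ := hN _
  have hkey : g * (1 - κ / n) * (b - 2 * ε) ≤ g * (1 - κ / n) * N Δ := by
    refine mul_le_mul_of_nonneg_left hΔb (mul_nonneg hg0.le ?_)
    rw [sub_nonneg, div_le_one hn]; exact hκn.le
  have hstrict : 2 * ε * (n / (n - κ)) < g * N Δ := by
    have h := hb.trans_le hkey
    have e : (1 - κ / n) = (n - κ) / n := by field_simp
    rw [e] at h
    rw [← mul_div_assoc, div_lt_iff₀ hκn']
    have := mul_lt_mul_of_pos_right h hn
    have e2 : g * ((n - κ) / n) * N Δ * n = g * N Δ * (n - κ) := by field_simp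
    linarith
  rw [div_mul_eq_mul_div, div_lt_iff₀ hyg0]
  have hn1 : 0 ≤ n * (1 - x) / (n - κ) := div_nonneg (mul_nonneg hn.le (by linarith)) hκn'.le
  calc x ^ g * N (k⁻¹ • s₁ - (n - k)⁻¹ • (s₂ + s₃))
      ≤ x ^ g * (y * N Δ + n * (1 - x) / (n - k) * (A + T)) :=
        mul_le_mul_of_nonneg_left hΔk hxg0.le
    _ = y * (x ^ g * N Δ + n * (1 - x) / (n - κ) * (x ^ g * A + x ^ g * T)) := by
        rw [hy]; field_simp
    _ ≤ y * ((1 - g * (1 - x)) * N Δ + n * (1 - x) / (n - κ) * (ε + ε)) := by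
        refine mul_le_mul_of_nonneg_left (add_le_add (mul_le_mul_of_nonneg_right hxg hΔ0)
          (mul_le_mul_of_nonneg_left (add_le_add h₁ ?_) hn1)) hy0.le
        exact (mul_le_of_le_one_left hT0 hxg1).trans hTε
    _ = y * (N Δ - (1 - x) * (g * N Δ - 2 * ε * (n / (n - κ)))) := by ring
    _ < y * N Δ := by
        refine mul_lt_mul_of_pos_left ?_ hy0
        have : 0 < (1 - x) * (g * N Δ - 2 * ε * (n / (n - κ))) :=
          mul_pos (by linarith) (by linarith)
        linarith
    _ ≤ N Δ * y ^ g := by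
        rw [mul_comm]; exact mul_le_mul_of_nonneg_left hyg hΔ0

end WeightedContrast

section PartialSums

theorem enorm_sq_eq_ofReal (x : ℝ) : ‖x‖ₑ ^ 2 = ENNReal.ofReal (x ^ 2) := by
  rw [← ofReal_norm, ← ENNReal.ofReal_pow (norm_nonneg _), Real.norm_eq_abs, sq_abs]

theorem lintegral_enorm_sq_eq {α : Type*} {mα : MeasurableSpace α} {μ : Measure α} {Y : α → ℝ}
    (h : MemLp Y 2 μ) : ∫⁻ x, ‖Y x‖ₑ ^ 2 ∂μ = ENNReal.ofReal (∫ x, Y x ^ 2 ∂μ) := by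
  simp_rw [enorm_sq_eq_ofReal]
  rw [ofReal_integral_eq_lintegral_ofReal h.integrable_sq (ae_of_all _ fun x => sq_nonneg _)]

theorem memLp_two_of_lintegral_enorm_sq_ne_top {α : Type*} {mα : MeasurableSpace α}
    {μ : Measure α} {Y : α → ℝ} (hY : AEStronglyMeasurable Y μ)
    (h : ∫⁻ x, ‖Y x‖ₑ ^ 2 ∂μ ≠ ∞) : MemLp Y 2 μ := by
  refine ⟨hY, ?_⟩
  rw [eLpNorm_lt_top_iff_lintegral_rpow_enorm_lt_top (by norm_num) (by norm_num)]
  simpa using h.lt_top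

theorem measure_lt_le_of_lintegral_sq_le {α : Type*} {mα : MeasurableSpace α} {μ : Measure α}
    {u : α → ℝ≥0∞} (hu : AEMeasurable u μ) {B t : ℝ≥0∞} (h : ∫⁻ x, u x ^ 2 ∂μ ≤ B)
    (ht0 : t ≠ 0) (ht : t ≠ ∞) : μ {x | t < u x} ≤ B / t ^ 2 := by
  refine (measure_mono fun x (hx : t < u x) => ?_).trans
    ((meas_ge_le_lintegral_div (hu.pow_const 2) (pow_ne_zero 2 ht0) (ENNReal.pow_ne_top ht)).trans
      (ENNReal.div_le_div_right h _))
  exact pow_le_pow_left' hx.le 2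

/-- Rows `W i` of centered random variables, of which the first `L` have second moment at most
`σ i ^ 2` and covariances decaying like `m ^ (-s)`. -/
structure HasDecayingCovariance {Ω ι : Type*} [MeasurableSpace Ω] (ℙ : Measure Ω) (σ : ι → ℝ≥0) (C s : ℝ) (L : ℕ)
    (W : ι → ℕ → Ω → ℝ) : Prop where
  aestronglyMeasurable : ∀ i j, AEStronglyMeasurable (W i j) ℙ
  lintegral_sq_le : ∀ i, ∀ j < L, ∫⁻ ω, ‖W i j ω‖ₑ ^ 2 ∂ℙ ≤ (σ i : ℝ≥0∞) ^ 2
  integral_mul_le : ∀ i j m, j + (m + 1) < L →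
    ∫ ω, W i j ω * W i (j + (m + 1)) ω ∂ℙ ≤ C * ((m + 1 : ℕ) : ℝ) ^ (-s) * (σ i : ℝ) ^ 2

variable {Ω ι : Type*}

/-- The weighted sum over the family of the absolute partial sums. -/
noncomputable def weightedSum (c : ι → ℝ≥0∞) (W : ι → ℕ → Ω → ℝ) (l : ℕ) (ω : Ω) : ℝ≥0∞ :=
  ∑' i, c i * ‖∑ j ∈ Finset.range l, W i j ω‖ₑ

/-- The weighted sum over the family of the absolute increments between two indices. -/
noncomputable def weightedGap (c : ι → ℝ≥0∞) (W : ι → ℕ → Ω → ℝ) (a b : ℕ) (ω : Ω) : ℝ≥0∞ :=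
  ∑' i, c i * ∑ j ∈ Finset.Ico a b, ‖W i j ω‖ₑ

theorem weightedSum_le_add_weightedGap (c : ι → ℝ≥0∞) (W : ι → ℕ → Ω → ℝ) {a b l : ℕ}
    (hal : a ≤ l) (hlb : l ≤ b) (ω : Ω) :
    weightedSum c W l ω ≤ weightedSum c W a ω + weightedGap c W a b ω := by
  rw [weightedSum, weightedSum, weightedGap, ← ENNReal.tsum_add]
  refine ENNReal.tsum_le_tsum fun i => ?_
  rw [← mul_add]
  refine mul_le_mul_right ?_ _
  rw [← Finset.sum_range_add_sum_Ico _ hal]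
  refine (enorm_add_le _ _).trans (add_le_add_right ?_ _)
  refine (enorm_sum_le _ _).trans ?_
  exact Finset.sum_le_sum_of_subset (Finset.Ico_subset_Ico_right hlb)

variable [MeasurableSpace Ω] {ℙ : Measure Ω} {σ : ι → ℝ≥0} {C s : ℝ} {L : ℕ}
  {W : ι → ℕ → Ω → ℝ}

namespace HasDecayingCovariance

theorem memLp (h : HasDecayingCovariance ℙ σ C s L W) (i : ι) {j : ℕ} (hj : j < L) :
    MemLp (W i j) 2 ℙ :=
  memLp_two_of_lintegral_enorm_sq_ne_top (h.aestronglyMeasurable i j)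
    ((h.lintegral_sq_le i j hj).trans_lt (by finiteness)).ne

variable [Countable ι] (c : ι → ℝ≥0∞)

theorem aemeasurable_weightedSum (h : HasDecayingCovariance ℙ σ C s L W) (l : ℕ) :
    AEMeasurable (weightedSum c W l) ℙ :=
  AEMeasurable.tsum fun i => (Finset.aestronglyMeasurable_fun_sum _ fun j _ =>
    h.aestronglyMeasurable i j).enorm.const_mul _

theorem aemeasurable_weightedGap (h : HasDecayingCovariance ℙ σ C s L W) (a b : ℕ) :
    AEMeasurable (weightedGap c W a b) ℙ :=
  AEMeasurable.tsum fun i => (Finset.aemeasurable_fun_sum _ fun j _ =>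
    (h.aestronglyMeasurable i j).enorm).const_mul _

theorem lintegral_weightedSum_sq_le (h : HasDecayingCovariance ℙ σ C s L W) (hC : 0 ≤ C)
    (hs0 : 0 ≤ s) (hs1 : s < 1) {l : ℕ} (hl : l ≤ L) :
    ∫⁻ ω, weightedSum c W l ω ^ 2 ∂ℙ ≤ (∑' i, c i * σ i) ^ 2 *
      ENNReal.ofReal ((1 + 2 * C / (1 - s)) * (l * (l : ℝ) ^ (1 - s))) := by
  have hs : 0 < 1 - s := by linarith
  set R := (1 + 2 * C / (1 - s)) * (l * (l : ℝ) ^ (1 - s)) with hR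
  have hR0 : 0 ≤ R := by positivity
  have e : ENNReal.ofReal R = ENNReal.ofReal (Real.sqrt R) ^ 2 := by
    rw [← ENNReal.ofReal_pow (Real.sqrt_nonneg _), Real.sq_sqrt hR0]
  rw [e, ← mul_pow, ← ENNReal.tsum_mul_right]
  refine lintegral_tsum_sq_le (fun i => (Finset.aestronglyMeasurable_fun_sum _ fun j _ =>
    h.aestronglyMeasurable i j).enorm.const_mul _) fun i => ?_
  simp_rw [mul_pow]
  rw [lintegral_const_mul'' _ ((Finset.aestronglyMeasurable_fun_sum _ fun j _ =>
    h.aestronglyMeasurable i j).enorm.pow_const 2), mul_assoc]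
  refine mul_le_mul_right ?_ _
  rw [lintegral_enorm_sq_eq (memLp_finsetSum _ fun j hj =>
    h.memLp i ((Finset.mem_range.1 hj).trans_le hl)), ← e]
  have := integral_sum_sq_le_of_decay hC hs0 hs1 (sq_nonneg (σ i : ℝ)) (Y := W i) (ℙ := ℙ) (L := L)
    (fun j hj => h.memLp i hj) (fun j hj => ?_) (fun j m hjm => h.integral_mul_le i j m hjm) hl
  · refine (ENNReal.ofReal_le_ofReal this).trans_eq ?_
    rw [mul_assoc, ENNReal.ofReal_mul (sq_nonneg _), ENNReal.ofReal_pow (NNReal.coe_nonneg _),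
      ENNReal.ofReal_coe_nnreal]
  · have h1 := h.lintegral_sq_le i j hj
    rw [lintegral_enorm_sq_eq (h.memLp i hj), ← ENNReal.ofReal_coe_nnreal,
      ← ENNReal.ofReal_pow (NNReal.coe_nonneg _)] at h1
    exact (ENNReal.ofReal_le_ofReal_iff (sq_nonneg _)).1 h1

theorem lintegral_weightedGap_sq_le (h : HasDecayingCovariance ℙ σ C s L W) {a b : ℕ}
    (hb : b ≤ L) :
    ∫⁻ ω, weightedGap c W a b ω ^ 2 ∂ℙ ≤ ((∑' i, c i * σ i) * (b - a : ℕ)) ^ 2 := by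
  rw [← ENNReal.tsum_mul_right]
  have hm : ∀ i, AEMeasurable (fun ω => ∑ j ∈ Finset.Ico a b, ‖W i j ω‖ₑ) ℙ := fun i =>
    Finset.aemeasurable_fun_sum _ fun j _ => (h.aestronglyMeasurable i j).enorm
  refine lintegral_tsum_sq_le (fun i => (hm i).const_mul _) fun i => ?_
  simp_rw [mul_pow]
  rw [lintegral_const_mul'' _ ((hm i).pow_const 2), mul_assoc, ← mul_pow]
  refine mul_le_mul_right ?_ _
  refine (lintegral_finset_sum_sq_le (c := fun _ => (σ i : ℝ≥0∞)) _
    (fun j _ => (h.aestronglyMeasurable i j).enorm)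
    fun j hj => h.lintegral_sq_le i j ((Finset.mem_Ico.1 hj).2.trans_le hb)).trans_eq ?_
  rw [Finset.sum_const, Nat.card_Ico, nsmul_eq_mul, mul_comm]

theorem measure_exists_lt_weightedSum_le (h : HasDecayingCovariance ℙ σ C s L W) {M : ℕ}
    {t : ℝ≥0∞} (ht0 : t ≠ 0) (ht : t ≠ ∞) :
    ℙ {ω | ∃ l ≤ M, l ≤ L ∧ t < weightedSum c W l ω} ≤ ((∑' i, c i * σ i) * M) ^ 2 / t ^ 2 := by
  have h1 := h.lintegral_weightedGap_sq_le c (a := 0) (b := min M L) (min_le_right _ _)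
  refine (measure_mono fun ω hω => ?_).trans ((measure_lt_le_of_lintegral_sq_le
    (h.aemeasurable_weightedGap c 0 (min M L)) h1 ht0 ht).trans ?_)
  · obtain ⟨l, hlM, hlL, hl⟩ := hω
    refine hl.trans_le ((weightedSum_le_add_weightedGap c W (Nat.zero_le l) (le_min hlM hlL)
      ω).trans_eq ?_)
    simp [weightedSum]
  · gcongr
    simp

end HasDecayingCovariance

end PartialSums

section UniformTail

theorem exists_pow_le_and_lt_succ_pow {a : ℕ} (ha : a ≠ 0) (l : ℕ) :
    ∃ j : ℕ, j ^ a ≤ l ∧ l < (j + 1) ^ a := by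
  have hex : ∃ j : ℕ, l < (j + 1) ^ a :=
    ⟨l, (Nat.lt_succ_self l).trans_le (Nat.le_self_pow ha _)⟩
  refine ⟨Nat.find hex, ?_, Nat.find_spec hex⟩
  rcases Nat.eq_zero_or_pos (Nat.find hex) with h0 | hpos
  · rw [h0, zero_pow ha]; exact Nat.zero_le _
  · have := Nat.find_min hex (Nat.sub_lt hpos one_pos)
    rw [show Nat.find hex - 1 + 1 = Nat.find hex by omega] at this
    exact not_lt.1 this

theorem succ_pow_succ_le (b : ℕ) {j : ℕ} (hj : 1 ≤ j) :
    (j + 1) ^ (b + 1) ≤ j ^ (b + 1) + (b + 1) * (2 * j) ^ b := by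
  induction b with
  | zero => simp
  | succ b ih =>
    have h1 : (j + 1) ^ (b + 1) ≤ (2 * j) ^ (b + 1) := Nat.pow_le_pow_left (by omega) _
    have h2 : (b + 1) * (2 * j) ^ b * j ≤ (b + 1) * (2 * j) ^ (b + 1) := by
      rw [pow_succ, mul_assoc]
      exact Nat.mul_le_mul_left _ (Nat.mul_le_mul_left _ (by omega))
    calc (j + 1) ^ (b + 1 + 1) = (j + 1) ^ (b + 1) * j + (j + 1) ^ (b + 1) := by ring
      _ ≤ (j ^ (b + 1) + (b + 1) * (2 * j) ^ b) * j + (2 * j) ^ (b + 1) :=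
          add_le_add (Nat.mul_le_mul_right _ ih) h1
      _ = j ^ (b + 1 + 1) + (b + 1) * (2 * j) ^ b * j + (2 * j) ^ (b + 1) := by ring
      _ ≤ j ^ (b + 1 + 1) + (b + 1) * (2 * j) ^ (b + 1) + (2 * j) ^ (b + 1) := by gcongr
      _ = _ := by ring

theorem div_ofReal_sq {t : ℝ} (ht : 0 < t) (x : ℝ≥0∞) :
    x / ENNReal.ofReal t ^ 2 = x * ENNReal.ofReal (1 / t ^ 2) := by
  rw [← ENNReal.ofReal_pow ht.le, div_eq_mul_inv, ← ENNReal.ofReal_inv_of_pos (by positivity),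
    one_div]

variable {Ω ι : Type*} [MeasurableSpace Ω] {ℙ : Measure Ω} {σ : ι → ℝ≥0} {C s : ℝ} [Countable ι]
  (c : ι → ℝ≥0∞)

namespace HasDecayingCovariance

theorem measure_lt_weightedSum_pow_le {L : ℕ} {W : ι → ℕ → Ω → ℝ}
    (h : HasDecayingCovariance ℙ σ C s L W) (hC : 0 ≤ C) (hs0 : 0 ≤ s) (hs1 : s < 1)
    {a : ℕ} (has : 2 ≤ a * s) {ε : ℝ} (hε : 0 < ε) {j : ℕ} (hj : 1 ≤ j) (hL : j ^ a ≤ L) :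
    ℙ {ω | ENNReal.ofReal (ε * (j ^ a : ℕ) / 2) < weightedSum c W (j ^ a) ω} ≤
      (∑' i, c i * σ i) ^ 2 *
        ENNReal.ofReal (4 / ε ^ 2 * (1 + 2 * C / (1 - s)) * (1 / (j : ℝ) ^ 2)) := by
  have hs : 0 < 1 - s := by linarith
  have hn : (0 : ℝ) < (j ^ a : ℕ) := by positivity
  have hj1 : (1 : ℝ) ≤ j := by exact_mod_cast hj
  have hj0 : (0 : ℝ) < j := by positivity
  refine (measure_lt_le_of_lintegral_sq_le (h.aemeasurable_weightedSum c _)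
    (h.lintegral_weightedSum_sq_le c hC hs0 hs1 hL)
    (by rw [ne_eq, ENNReal.ofReal_eq_zero, not_le]; positivity) ENNReal.ofReal_ne_top).trans ?_
  rw [div_ofReal_sq (by positivity), mul_assoc, ← ENNReal.ofReal_mul (by positivity)]
  refine mul_le_mul_right (ENNReal.ofReal_le_ofReal ?_) _
  have e : ((j ^ a : ℕ) : ℝ) ^ (1 - s) = (j ^ a : ℕ) * (j : ℝ) ^ (-(a * s)) := by
    rw [sub_eq_add_neg, Real.rpow_add hn, Real.rpow_one]
    congr 1
    push_cast
    rw [← Real.rpow_natCast, ← Real.rpow_mul hj0.le]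
    congr 1; ring
  have h2 : (j : ℝ) ^ (-(a * s)) ≤ 1 / (j : ℝ) ^ 2 := by
    rw [one_div, ← Real.rpow_natCast, ← Real.rpow_neg hj0.le]
    exact Real.rpow_le_rpow_of_exponent_le hj1 (by push_cast; linarith)
  rw [e]
  calc _ = 4 / ε ^ 2 * (1 + 2 * C / (1 - s)) * (j : ℝ) ^ (-(a * s)) := by
        field_simp; ring
    _ ≤ _ := by gcongr

theorem measure_lt_weightedGap_pow_le {L : ℕ} {W : ι → ℕ → Ω → ℝ}
    (h : HasDecayingCovariance ℙ σ C s L W) (b : ℕ) {ε : ℝ} (hε : 0 < ε) {j : ℕ} (hj : 1 ≤ j) :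
    ℙ {ω | ENNReal.ofReal (ε * (j ^ (b + 1) : ℕ) / 2) <
        weightedGap c W (j ^ (b + 1)) (min ((j + 1) ^ (b + 1)) L) ω} ≤
      (∑' i, c i * σ i) ^ 2 *
        ENNReal.ofReal (4 / ε ^ 2 * ((b + 1) * 2 ^ b) ^ 2 * (1 / (j : ℝ) ^ 2)) := by
  have hj0 : (0 : ℝ) < j := by positivity
  have hn : (0 : ℝ) < (j ^ (b + 1) : ℕ) := by positivity
  refine (measure_lt_le_of_lintegral_sq_le (h.aemeasurable_weightedGap c _ _)
    (h.lintegral_weightedGap_sq_le c (min_le_right _ _))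
    (by rw [ne_eq, ENNReal.ofReal_eq_zero, not_le]; positivity) ENNReal.ofReal_ne_top).trans ?_
  rw [div_ofReal_sq (by positivity), mul_pow, mul_assoc]
  refine mul_le_mul_right ?_ _
  have hgap : min ((j + 1) ^ (b + 1)) L - j ^ (b + 1) ≤ (b + 1) * (2 * j) ^ b := by
    have := succ_pow_succ_le b hj
    have := min_le_left ((j + 1) ^ (b + 1)) L
    omega
  have hgap' : ((min ((j + 1) ^ (b + 1)) L - j ^ (b + 1) : ℕ) : ℝ≥0∞) ≤
      ENNReal.ofReal ((b + 1) * (2 * j) ^ b) := by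
    rw [← ENNReal.ofReal_natCast]
    refine ENNReal.ofReal_le_ofReal ?_
    exact_mod_cast hgap
  refine (mul_le_mul_left (pow_le_pow_left' hgap' 2) _).trans_eq ?_
  rw [← ENNReal.ofReal_pow (by positivity), ← ENNReal.ofReal_mul (by positivity)]
  congr 1
  push_cast
  field_simp
  ring

theorem exists_measure_mul_lt_weightedSum_le (hc : ∑' i, c i * σ i ≠ ∞) (hC : 0 ≤ C)
    (hs0 : 0 < s) (hs1 : s < 1) {ε : ℝ} (hε : 0 < ε) {δ : ℝ≥0∞} (hδ : δ ≠ 0) :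
    ∃ M : ℕ, 1 ≤ M ∧ ∀ (L : ℕ) (W : ι → ℕ → Ω → ℝ), HasDecayingCovariance ℙ σ C s L W →
      ℙ {ω | ∃ l, M ≤ l ∧ l ≤ L ∧ ENNReal.ofReal (ε * l) < weightedSum c W l ω} ≤ δ := by
  obtain ⟨b, hb⟩ : ∃ b : ℕ, 2 ≤ ((b + 1 : ℕ) : ℝ) * s := by
    obtain ⟨b, hb⟩ := exists_nat_ge (2 / s)
    refine ⟨b, ?_⟩
    rw [div_le_iff₀ hs0] at hb
    push_cast; nlinarith
  set K := ∑' i, c i * σ i with hK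
  set B : ℝ := 4 / ε ^ 2 * (1 + 2 * C / (1 - s)) with hB
  set G : ℝ := 4 / ε ^ 2 * ((b + 1) * 2 ^ b) ^ 2 with hG
  have hs : 0 < 1 - s := by linarith
  have hB0 : 0 ≤ B := by positivity
  have hG0 : 0 ≤ G := by positivity
  set f : ℕ → ℝ≥0∞ := fun j => K ^ 2 * ENNReal.ofReal ((B + G) * (1 / (j : ℝ) ^ 2)) with hf
  have hsum : ∑' j, f j ≠ ∞ := by
    rw [hf, ENNReal.tsum_mul_left]
    refine ENNReal.mul_ne_top (ENNReal.pow_ne_top hc) ?_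
    exact ((Real.summable_one_div_nat_pow.2 one_lt_two).mul_left _).tsum_ofReal_ne_top
  obtain ⟨j₀, hj₀⟩ := (((ENNReal.tendsto_sum_nat_add f hsum).eventually
    (ge_mem_nhds (pos_iff_ne_zero.2 hδ))).and (eventually_ge_atTop 1)).exists
  refine ⟨j₀ ^ (b + 1), Nat.one_le_pow _ _ hj₀.2, fun L W h => ?_⟩
  refine le_trans ?_ hj₀.1
  set S : ℕ → Set Ω := fun j =>
    {ω | j ^ (b + 1) ≤ L ∧
      ENNReal.ofReal (ε * (j ^ (b + 1) : ℕ) / 2) < weightedSum c W (j ^ (b + 1)) ω} ∪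
    {ω | ENNReal.ofReal (ε * (j ^ (b + 1) : ℕ) / 2) <
      weightedGap c W (j ^ (b + 1)) (min ((j + 1) ^ (b + 1)) L) ω} with hS
  refine (measure_mono (t := ⋃ k, S (k + j₀)) ?_).trans ((measure_iUnion_le _).trans
    (ENNReal.tsum_le_tsum fun k => ?_))
  · rintro ω ⟨l, hMl, hlL, hl⟩
    obtain ⟨j, hjl, hlj⟩ := exists_pow_le_and_lt_succ_pow (Nat.succ_ne_zero b) l
    have hj : j₀ ≤ j := Nat.lt_succ_iff.1
      ((Nat.pow_lt_pow_iff_left (Nat.succ_ne_zero b)).1 (hMl.trans_lt hlj))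
    refine Set.mem_iUnion.2 ⟨j - j₀, ?_⟩
    rw [Nat.sub_add_cancel hj]
    by_contra hcon
    rw [hS, Set.mem_union, not_or] at hcon
    obtain ⟨h1, h2⟩ := hcon
    simp only [Set.mem_ofPred_eq, not_and, not_lt] at h1 h2
    have h3 := weightedSum_le_add_weightedGap c W hjl (le_min hlj.le hlL) ω
    refine absurd (h3.trans (add_le_add (h1 (hjl.trans hlL)) h2)) (not_le.2 (lt_of_le_of_lt ?_ hl))
    rw [← ENNReal.ofReal_add (by positivity) (by positivity), add_halves]
    exact ENNReal.ofReal_le_ofReal (mul_le_mul_of_nonneg_left (by exact_mod_cast hjl) hε.le)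
  · have hj : 1 ≤ k + j₀ := hj₀.2.trans (Nat.le_add_left _ _)
    refine (measure_union_le _ _).trans ?_
    have e : f (k + j₀) = K ^ 2 * ENNReal.ofReal (B * (1 / ((k + j₀ : ℕ) : ℝ) ^ 2)) +
        K ^ 2 * ENNReal.ofReal (G * (1 / ((k + j₀ : ℕ) : ℝ) ^ 2)) := by
      rw [← mul_add, ← ENNReal.ofReal_add (by positivity) (by positivity), ← add_mul]
    rw [e]
    refine add_le_add ?_ (h.measure_lt_weightedGap_pow_le c b hε hj)
    by_cases hL : (k + j₀) ^ (b + 1) ≤ L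
    · refine (measure_mono fun ω hω => hω.2).trans
        (h.measure_lt_weightedSum_pow_le c hC hs0.le hs1 hb hε hj hL)
    · simp [hL]

end HasDecayingCovariance

end UniformTail

section Blocks

variable {E : Type*} [MeasurableSpace E] {ι : Type*}

theorem ENNReal.le_one_add_sq (x : ℝ≥0∞) : x ≤ 1 + x ^ 2 := by
  rcases le_total x 1 with h | h
  · exact h.trans le_self_add
  · exact (le_self_pow₀ h two_ne_zero).trans le_add_self

/-- The differences of finite measures integrating the family are controlled, in the seminorm `N`,
by the weighted differences of the integrals of the family. -/
def IsControlledBy (N : SignedMeasure E → ℝ) (c : ι → ℝ≥0∞) (g : ι → E → ℝ) : Prop :=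
  ∀ (μ ν : Measure E) [IsFiniteMeasure μ] [IsFiniteMeasure ν],
    ∫⁻ x, ∑' i, c i * ‖g i x‖ₑ ∂μ ≠ ∞ → ∫⁻ x, ∑' i, c i * ‖g i x‖ₑ ∂ν ≠ ∞ →
      ENNReal.ofReal (N (μ.toSignedMeasure - ν.toSignedMeasure)) ≤
        ∑' i, c i * ‖∫ x, g i x ∂μ - ∫ x, g i x ∂ν‖ₑ

/-- The sum of the first `l` point masses minus its expectation under the law `π`. -/
noncomputable def centeredSum (π : Measure E) [IsFiniteMeasure π] (z : ℕ → E) (l : ℕ) :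
    SignedMeasure E :=
  ∑ j ∈ Finset.range l, (Measure.dirac (z j)).toSignedMeasure - (l : ℝ) • π.toSignedMeasure

theorem toSignedMeasure_sum_dirac (s : Finset ℕ) (z : ℕ → E) :
    (∑ j ∈ s, Measure.dirac (z j)).toSignedMeasure =
      ∑ j ∈ s, (Measure.dirac (z j)).toSignedMeasure := by
  classical
  induction s using Finset.induction_on with
  | empty => simp
  | insert a s has ih =>
    refine (Measure.toSignedMeasure_congr (Finset.sum_insert has)).trans ?_
    rw [Measure.toSignedMeasure_add, ih, Finset.sum_insert has]

theorem lintegral_tsum_enorm_ne_top [Countable ι] {c : ι → ℝ≥0∞} {σ : ι → ℝ≥0}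
    (hc : ∑' i, c i * σ i ≠ ∞) {g : ι → E → ℝ} (hg : ∀ i, Measurable (g i)) {π : Measure E}
    [IsFiniteMeasure π] (hπ : ∀ i, ∫⁻ x, ‖g i x‖ₑ ^ 2 ∂π ≤ (σ i : ℝ≥0∞) ^ 2) :
    ∫⁻ x, (∑' i, c i * ‖g i x‖ₑ) ^ 2 ∂π ≤ (∑' i, c i * σ i) ^ 2 ∧
      ∫⁻ x, ∑' i, c i * ‖g i x‖ₑ ∂π ≠ ∞ := by
  have h : ∫⁻ x, (∑' i, c i * ‖g i x‖ₑ) ^ 2 ∂π ≤ (∑' i, c i * σ i) ^ 2 := by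
    refine lintegral_tsum_sq_le (fun i => ((hg i).enorm.const_mul _).aemeasurable) fun i => ?_
    simp_rw [mul_pow]
    rw [lintegral_const_mul _ ((hg i).enorm.pow_const 2)]
    exact mul_le_mul_right (hπ i) _
  refine ⟨h, ne_of_lt ?_⟩
  refine (lintegral_mono fun x => ENNReal.le_one_add_sq _).trans_lt ?_
  rw [lintegral_add_left measurable_const, lintegral_const, one_mul]
  exact ENNReal.add_lt_top.2 ⟨measure_lt_top _ _, h.trans_lt (ENNReal.pow_lt_top hc.lt_top)⟩

theorem IsControlledBy.ofReal_centeredSum_le {N : SignedMeasure E → ℝ} {c : ι → ℝ≥0∞}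
    {g : ι → E → ℝ} (hN : IsControlledBy N c g) [Countable ι] (hg : ∀ i, Measurable (g i))
    {π : Measure E} [IsProbabilityMeasure π] (hπ : ∫⁻ x, ∑' i, c i * ‖g i x‖ₑ ∂π ≠ ∞) {z : ℕ → E}
    {l : ℕ} (hz : ∀ j < l, ∑' i, c i * ‖g i (z j)‖ₑ ≠ ∞) :
    ENNReal.ofReal (N (centeredSum π z l)) ≤
      weightedSum c (fun i j (z : ℕ → E) => g i (z j) - ∫ x, g i x ∂π) l z := by
  have hGm : Measurable fun x => ∑' i, c i * ‖g i x‖ₑ :=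
    Measurable.tsum fun i => (hg i).enorm.const_mul _
  have h := hN (∑ j ∈ Finset.range l, Measure.dirac (z j)) ((l : ℝ≥0) • π) ?_ ?_
  · rw [toSignedMeasure_sum_dirac, Measure.toSignedMeasure_smul] at h
    refine h.trans_eq (tsum_congr fun i => ?_)
    rw [integral_finsetSum_measure fun j _ =>
      integrable_dirac' (hg i).stronglyMeasurable enorm_lt_top, integral_smul_nnreal_measure]
    simp_rw [integral_dirac' _ _ (hg i).stronglyMeasurable]
    rw [Finset.sum_sub_distrib, Finset.sum_const, Finset.card_range, nsmul_eq_mul,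
      NNReal.smul_def, smul_eq_mul, NNReal.coe_natCast]
  · rw [lintegral_finsetSum_measure]
    simp_rw [lintegral_dirac' _ hGm]
    exact ENNReal.sum_ne_top.2 fun j hj => hz j (Finset.mem_range.1 hj)
  · rw [lintegral_smul_measure]
    exact ENNReal.mul_ne_top ENNReal.coe_ne_top hπ

variable {Ω : Type*} [MeasurableSpace Ω]

/-- The first `L` observations `Z j` have law `π`, and the family `g` evaluated along them has
second moments at most `σ i ^ 2` and covariances decaying like `m ^ (-s)`. -/
structure IsDecayingBlock (ℙ : Measure Ω) (g : ι → E → ℝ) (σ : ι → ℝ≥0) (C s : ℝ) (π : Measure E)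
    (L : ℕ) (Z : ℕ → Ω → E) : Prop where
  measurable : ∀ j, Measurable (Z j)
  map_eq : ∀ j < L, Measure.map (Z j) ℙ = π
  lintegral_sq_le : ∀ i, ∫⁻ x, ‖g i x‖ₑ ^ 2 ∂π ≤ (σ i : ℝ≥0∞) ^ 2
  abs_covar_le : ∀ i j m, j + (m + 1) < L →
    |covar ℙ (fun ω => g i (Z j ω)) (fun ω => g i (Z (j + (m + 1)) ω))| ≤
      C * ((m + 1 : ℕ) : ℝ) ^ (-s) * (σ i : ℝ) ^ 2

variable {ℙ : Measure Ω} {g : ι → E → ℝ} {σ : ι → ℝ≥0} {C s : ℝ}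
  {π : Measure E} {L : ℕ} {Z : ℕ → Ω → E}

namespace IsDecayingBlock

theorem hasDecayingCovariance [IsProbabilityMeasure ℙ] (h : IsDecayingBlock ℙ g σ C s π L Z) (hg : ∀ i, Measurable (g i)) :
    HasDecayingCovariance ℙ σ C s L fun i j ω => g i (Z j ω) - ∫ x, g i x ∂π := by
  have hm : ∀ i j, AEStronglyMeasurable (fun ω => g i (Z j ω)) ℙ := fun i j =>
    ((hg i).comp (h.measurable j)).aestronglyMeasurable
  have hmean : ∀ i, ∀ j < L, ∫ ω, g i (Z j ω) ∂ℙ = ∫ x, g i x ∂π := fun i j hj => by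
    rw [← h.map_eq j hj, integral_map (h.measurable j).aemeasurable
      (hg i).aestronglyMeasurable]
  refine ⟨fun i j => (hm i j).sub aestronglyMeasurable_const, fun i j hj => ?_,
    fun i j m hjm => ?_⟩
  · have h2 : ∫⁻ ω, ‖g i (Z j ω)‖ₑ ^ 2 ∂ℙ ≤ (σ i : ℝ≥0∞) ^ 2 := by
      refine le_trans (le_of_eq ?_) (h.lintegral_sq_le i)
      rw [← h.map_eq j hj, lintegral_map ((hg i).enorm.pow_const 2) (h.measurable j)]
    have hL : MemLp (fun ω => g i (Z j ω)) 2 ℙ :=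
      memLp_two_of_lintegral_enorm_sq_ne_top (hm i j) (h2.trans_lt (by finiteness)).ne
    rw [lintegral_enorm_sq_eq hL] at h2
    refine le_trans ?_ h2
    rw [← hmean i j hj]
    simp_rw [enorm_sq_eq_ofReal]
    rw [← ProbabilityTheory.evariance_eq_lintegral_ofReal, ← ProbabilityTheory.ofReal_variance hL]
    exact ENNReal.ofReal_le_ofReal (ProbabilityTheory.variance_le_expectation_sq (hm i j))
  · have h3 := (le_abs_self _).trans (h.abs_covar_le i j m hjm)
    rwa [covar, hmean i j (by omega), hmean i _ hjm] at h3

theorem ae_ofReal_centeredSum_le [Countable ι] [IsProbabilityMeasure π]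
    (h : IsDecayingBlock ℙ g σ C s π L Z) (hg : ∀ i, Measurable (g i)) {c : ι → ℝ≥0∞}
    (hc : ∑' i, c i * σ i ≠ ∞) {N : SignedMeasure E → ℝ} (hN : IsControlledBy N c g) :
    ∀ᵐ ω ∂ℙ, ∀ l ≤ L, ENNReal.ofReal (N (centeredSum π (fun j => Z j ω) l)) ≤
      weightedSum c (fun i j ω => g i (Z j ω) - ∫ x, g i x ∂π) l ω := by
  have hπ := (lintegral_tsum_enorm_ne_top hc hg h.lintegral_sq_le).2
  have hGm : Measurable fun x => ∑' i, c i * ‖g i x‖ₑ :=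
    Measurable.tsum fun i => (hg i).enorm.const_mul _
  have hae : ∀ j, ∀ᵐ ω ∂ℙ, j < L → ∑' i, c i * ‖g i (Z j ω)‖ₑ ≠ ∞ := by
    intro j
    by_cases hj : j < L
    · have h1 := ae_lt_top hGm hπ
      rw [← h.map_eq j hj] at h1
      filter_upwards [ae_of_ae_map (h.measurable j).aemeasurable h1] with ω hω _ using hω.ne
    · exact ae_of_all _ fun ω hj' => absurd hj' hj
  filter_upwards [ae_all_iff.2 hae] with ω hω l hl
  exact hN.ofReal_centeredSum_le hg hπ fun j hj => hω j (hj.trans_le hl)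

theorem exists_measure_mul_lt_seminorm_le (ℙ : Measure Ω) [IsProbabilityMeasure ℙ] [Countable ι]
    (hg : ∀ i, Measurable (g i)) {c : ι → ℝ≥0∞} (hc : ∑' i, c i * σ i ≠ ∞)
    {N : SignedMeasure E → ℝ} (hN : IsControlledBy N c g) (hC : 0 ≤ C) (hs0 : 0 < s) (hs1 : s < 1)
    {ε : ℝ} (hε : 0 < ε) {δ : ℝ≥0∞} (hδ : δ ≠ 0) :
    ∃ M : ℕ, 1 ≤ M ∧ ∀ (π : Measure E) [IsProbabilityMeasure π] (L : ℕ) (Z : ℕ → Ω → E),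
      IsDecayingBlock ℙ g σ C s π L Z →
      ℙ {ω | ∃ l, M ≤ l ∧ l ≤ L ∧ ε * l < N (centeredSum π (fun j => Z j ω) l)} ≤ δ := by
  obtain ⟨M, hM, h⟩ := HasDecayingCovariance.exists_measure_mul_lt_weightedSum_le (ℙ := ℙ) c hc hC
    hs0 hs1 hε hδ
  refine ⟨M, hM, fun π _ L Z hZ => ?_⟩
  refine (measure_mono_ae ?_).trans (h L _ (hZ.hasDecayingCovariance hg))
  filter_upwards [hZ.ae_ofReal_centeredSum_le hg hc hN] with ω hω
  rintro ⟨l, hMl, hlL, hl⟩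
  refine ⟨l, hMl, hlL, lt_of_lt_of_le ?_ (hω l hlL)⟩
  exact (ENNReal.ofReal_lt_ofReal_iff_of_nonneg (by positivity)).2 hl

theorem measure_exists_lt_seminorm_le [IsProbabilityMeasure ℙ] [Countable ι] [IsProbabilityMeasure π]
    (h : IsDecayingBlock ℙ g σ C s π L Z) (hg : ∀ i, Measurable (g i)) {c : ι → ℝ≥0∞}
    (hc : ∑' i, c i * σ i ≠ ∞) {N : SignedMeasure E → ℝ} (hN : IsControlledBy N c g) (M : ℕ)
    {t : ℝ} (ht : 0 < t) :
    ℙ {ω | ∃ l ≤ M, l ≤ L ∧ t < N (centeredSum π (fun j => Z j ω) l)} ≤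
      ((∑' i, c i * σ i) * M) ^ 2 / ENNReal.ofReal t ^ 2 := by
  refine (measure_mono_ae ?_).trans ((h.hasDecayingCovariance hg).measure_exists_lt_weightedSum_le
    c (M := M) (by rw [ne_eq, ENNReal.ofReal_eq_zero, not_le]; exact ht) ENNReal.ofReal_ne_top)
  filter_upwards [h.ae_ofReal_centeredSum_le hg hc hN] with ω hω
  rintro ⟨l, hlM, hlL, hl⟩
  refine ⟨l, hlM, hlL, lt_of_lt_of_le ?_ (hω l hlL)⟩
  exact (ENNReal.ofReal_lt_ofReal_iff_of_nonneg ht.le).2 hl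

end IsDecayingBlock

end Blocks

section ArgmaxLocation

variable {V : Type*} [AddCommGroup V]

theorem sum_Icc_succ_eq_sum_range (v : ℕ → V) (a b : ℕ) :
    ∑ i ∈ Finset.Icc (a + 1) b, v i = ∑ j ∈ Finset.range (b - a), v (a + 1 + j) := by
  have e : Finset.Icc (a + 1) b = Finset.Ico (a + 1) (b + 1) := by ext; simp
  rw [e, Finset.sum_Ico_eq_sum_range]
  congr 2
  omega

theorem sum_Icc_succ_eq_sum_range_sub (v : ℕ → V) (a b : ℕ) :
    ∑ i ∈ Finset.Icc (a + 1) b, v i = ∑ j ∈ Finset.range (b - a), v (b - j) := by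
  rw [sum_Icc_succ_eq_sum_range, ← Finset.sum_range_reflect]
  refine Finset.sum_congr rfl fun j hj => ?_
  have := Finset.mem_range.1 hj
  congr 1
  omega

variable [Module ℝ V] {N : V → ℝ}

/-- The weighted seminorm of the difference between the means of `v 1, …, v k` and of
`v (k + 1), …, v n`. -/
noncomputable def contrast (N : V → ℝ) (g : ℝ) (n : ℕ) (v : ℕ → V) (k : ℕ) : ℝ :=
  ((k : ℝ) / n * (1 - (k : ℝ) / n)) ^ g *
    N ((k : ℝ)⁻¹ • ∑ i ∈ Finset.Icc 1 k, v i -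
      ((n : ℝ) - k)⁻¹ • ∑ i ∈ Finset.Icc (k + 1) n, v i)

theorem contrast_reverse (hs : ∀ (a : ℝ) ν, N (a • ν) = |a| * N ν) (g : ℝ) (v : ℕ → V) {n k : ℕ}
    (hk0 : 0 < k) (hk : k < n) :
    contrast N g n (fun i => v (n + 1 - i)) (n - k) = contrast N g n v k := by
  have hn : (0 : ℝ) < n := by exact_mod_cast hk0.trans hk
  have e1 : ∑ i ∈ Finset.Icc 1 (n - k), v (n + 1 - i) = ∑ i ∈ Finset.Icc (k + 1) n, v i := by
    rw [sum_Icc_succ_eq_sum_range_sub v k n,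
      sum_Icc_succ_eq_sum_range (fun i => v (n + 1 - i)) 0 (n - k)]
    refine Finset.sum_congr rfl fun j _ => ?_
    congr 1; omega
  have e2 : ∑ i ∈ Finset.Icc (n - k + 1) n, v (n + 1 - i) = ∑ i ∈ Finset.Icc 1 k, v i := by
    rw [sum_Icc_succ_eq_sum_range v 0 k,
      sum_Icc_succ_eq_sum_range_sub (fun i => v (n + 1 - i)) (n - k) n]
    rw [show n - (n - k) = k - 0 by omega]
    refine Finset.sum_congr rfl fun j hj => ?_
    have := Finset.mem_range.1 hj
    congr 1; omega
  rw [contrast, contrast, e1, e2, ← seminorm_neg hs, neg_sub, Nat.cast_sub hk.le, sub_sub_cancel]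
  congr 2
  field_simp
  ring

theorem contrast_lt_of_lt (hs : ∀ (a : ℝ) ν, N (a • ν) = |a| * N ν)
    (ha : ∀ ν₁ ν₂, N (ν₁ + ν₂) ≤ N ν₁ + N ν₂) {g ε b : ℝ} (hg0 : 0 < g) (hg1 : g ≤ 1)
    {n κ k M : ℕ} (hk : 1 ≤ k) (hkκ : k + M ≤ κ) (hM : 1 ≤ M) (hκn : κ < n)
    (hb : 2 * ε < g * (1 - (κ : ℝ) / n) * (b - 2 * ε)) {v : ℕ → V} {p q : V}
    (hL : ∀ l, M ≤ l → l ≤ κ → N (∑ j ∈ Finset.range l, v (j + 1) - (l : ℝ) • p) ≤ ε * l)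
    (hL' : ∀ l ≤ M, l ≤ κ → N (∑ j ∈ Finset.range l, v (j + 1) - (l : ℝ) • p) ≤ ε * (κ : ℝ) ^ g)
    (hR : ∀ l, M ≤ l → l ≤ κ → N (∑ j ∈ Finset.range l, v (κ - j) - (l : ℝ) • p) ≤ ε * l)
    (hB : N (∑ j ∈ Finset.range (n - κ), v (κ + 1 + j) - ((n - κ : ℕ) : ℝ) • q) ≤
      ε * (n - κ : ℕ))
    (hpq : b ≤ N (p - q)) :
    contrast N g n v k < contrast N g n v κ := by
  have hsplit : ∑ i ∈ Finset.Icc (k + 1) n, v i =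
      ∑ i ∈ Finset.Icc (k + 1) κ, v i + ∑ i ∈ Finset.Icc (κ + 1) n, v i := by
    rw [← Finset.sum_union]
    · congr 1; ext i; simp; omega
    · rw [Finset.disjoint_left]; intro i; simp; omega
  have hsplit' : ∑ i ∈ Finset.Icc 1 κ, v i =
      ∑ i ∈ Finset.Icc 1 k, v i + ∑ i ∈ Finset.Icc (k + 1) κ, v i := by
    rw [← Finset.sum_union]
    · congr 1; ext i; simp; omega
    · rw [Finset.disjoint_left]; intro i; simp; omega
  have hk0 : (0 : ℝ) < k := by exact_mod_cast hk
  have hkκ' : (k : ℝ) < κ := by exact_mod_cast (by omega : k < κ)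
  have hκn' : (κ : ℝ) < n := by exact_mod_cast hκn
  have hκ0 : (0 : ℝ) < κ := hk0.trans hkκ'
  have hfwd : ∀ l, ∑ i ∈ Finset.Icc 1 l, v i = ∑ j ∈ Finset.range l, v (j + 1) := fun l => by
    rw [sum_Icc_succ_eq_sum_range v 0 l]
    refine Finset.sum_congr rfl fun j _ => ?_
    congr 1; omega
  rw [contrast, contrast, hsplit, hsplit']
  refine weighted_contrast_lt hs ha (ε := ε) (b := b) (p := p) (q := q) hg0 hg1 hk0 hkκ' hκn' hb
    ?_ ?_ ?_ ?_ hpq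
  · rw [hfwd]
    rcases le_total M k with hMk | hkM
    · have h := hL k hMk (by omega)
      have hx1 : ((k : ℝ) / κ) ^ g ≤ 1 :=
        Real.rpow_le_one (by positivity) ((div_le_one hκ0).2 hkκ'.le) hg0.le
      refine (mul_le_of_le_one_left (div_nonneg (seminorm_nonneg hs ha _) hk0.le) hx1).trans ?_
      rwa [div_le_iff₀ hk0]
    · have h := hL' k hkM (by omega)
      have hk1 : (k : ℝ) ^ g ≤ k := by
        simpa using Real.rpow_le_rpow_of_exponent_le (x := (k : ℝ)) (by exact_mod_cast hk) hg1
      rw [Real.div_rpow hk0.le hκ0.le, div_mul_div_comm, div_le_iff₀ (by positivity)]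
      calc (k : ℝ) ^ g * N (∑ j ∈ Finset.range k, v (j + 1) - (k : ℝ) • p)
          ≤ k * (ε * (κ : ℝ) ^ g) := mul_le_mul hk1 h (seminorm_nonneg hs ha _) hk0.le
        _ = _ := by ring
  · rw [sum_Icc_succ_eq_sum_range_sub, ← Nat.cast_sub (by omega)]
    exact hR _ (by omega) (by omega)
  · rw [← hsplit', hfwd]
    exact hL _ (by omega) le_rfl
  · rw [sum_Icc_succ_eq_sum_range, ← Nat.cast_sub hκn.le]
    exact hB

theorem abs_argmax_sub_lt (hs : ∀ (a : ℝ) ν, N (a • ν) = |a| * N ν)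
    (ha : ∀ ν₁ ν₂, N (ν₁ + ν₂) ≤ N ν₁ + N ν₂) {g ε b η : ℝ} (hg0 : 0 < g) (hg1 : g ≤ 1)
    {n κ k M : ℕ} (hk : 1 ≤ k) (hkn : k < n) (hM : 1 ≤ M) (hMκ : M ≤ κ) (hMn : M ≤ n - κ)
    (hη : η ≤ (κ : ℝ) / n) (hη' : η ≤ 1 - (κ : ℝ) / n)
    (hb : 2 * ε < g * η * (b - 2 * ε)) (hεb : 2 * ε ≤ b) {v : ℕ → V} {p q : V}
    (hL : ∀ l, M ≤ l → l ≤ κ → N (∑ j ∈ Finset.range l, v (j + 1) - (l : ℝ) • p) ≤ ε * l)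
    (hL' : ∀ l ≤ M, l ≤ κ → N (∑ j ∈ Finset.range l, v (j + 1) - (l : ℝ) • p) ≤ ε * (κ : ℝ) ^ g)
    (hLr : ∀ l, M ≤ l → l ≤ κ → N (∑ j ∈ Finset.range l, v (κ - j) - (l : ℝ) • p) ≤ ε * l)
    (hR : ∀ l, M ≤ l → l ≤ n - κ →
      N (∑ j ∈ Finset.range l, v (κ + 1 + j) - (l : ℝ) • q) ≤ ε * l)
    (hRr : ∀ l, M ≤ l → l ≤ n - κ → N (∑ j ∈ Finset.range l, v (n - j) - (l : ℝ) • q) ≤ ε * l)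
    (hRr' : ∀ l ≤ M, l ≤ n - κ →
      N (∑ j ∈ Finset.range l, v (n - j) - (l : ℝ) • q) ≤ ε * ((n - κ : ℕ) : ℝ) ^ g)
    (hpq : b ≤ N (p - q)) (hmax : contrast N g n v κ ≤ contrast N g n v k) :
    κ < k + M ∧ k < κ + M := by
  have hκn : κ < n := by omega
  have hn : (0 : ℝ) < n := by exact_mod_cast (by omega : 0 < n)
  refine ⟨lt_of_not_ge fun hkκ => ?_, lt_of_not_ge fun hkκ => ?_⟩
  · refine (contrast_lt_of_lt hs ha hg0 hg1 hk hkκ hM hκn ?_ hL hL' hLr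
      (hR _ hMn le_rfl) hpq).not_ge hmax
    refine hb.trans_le ?_
    gcongr
  · rw [← contrast_reverse hs g v (by omega) hκn, ← contrast_reverse hs g v (by omega) hkn] at hmax
    have hκ' : n - (n - κ) = κ := by omega
    refine (contrast_lt_of_lt hs ha (ε := ε) (b := b) (n := n) (κ := n - κ) (k := n - k) (M := M)
      (p := q) (q := p) (v := fun i => v (n + 1 - i)) hg0 hg1 (by omega) (by omega) hM (by omega)
      ?_ ?_ ?_ ?_ ?_ ?_).not_ge hmax
    · refine hb.trans_le ?_
      have e : 1 - ((n - κ : ℕ) : ℝ) / n = κ / n := by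
        rw [Nat.cast_sub hκn.le]; field_simp; ring
      rw [e]
      gcongr
    · intro l hMl hl
      refine le_of_eq_of_le ?_ (hRr l hMl hl)
      congr 2
      refine Finset.sum_congr rfl fun j _ => ?_
      congr 1; omega
    · intro l hMl hl
      refine le_of_eq_of_le ?_ (hRr' l hMl hl)
      congr 2
      refine Finset.sum_congr rfl fun j _ => ?_
      congr 1; omega
    · intro l hMl hl
      refine le_of_eq_of_le ?_ (hR l hMl hl)
      congr 2
      refine Finset.sum_congr rfl fun j hj => ?_
      have := Finset.mem_range.1 hj
      congr 1; omega
    · rw [hκ']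
      refine le_of_eq_of_le ?_ (hLr κ hMκ le_rfl)
      congr 2
      refine Finset.sum_congr rfl fun j hj => ?_
      have := Finset.mem_range.1 hj
      congr 1; omega
    · rwa [← seminorm_neg hs, neg_sub]

end ArgmaxLocation

section SquareIntegrablePart

variable {E : Type*} [MeasurableSpace E] {ι : Type*} [Countable ι]

theorem exists_squareIntegrable_part {P Q : ℕ → Measure E} [∀ n, IsProbabilityMeasure (P n)]
    [∀ n, IsProbabilityMeasure (Q n)] {f : ι → E → ℝ} (hf : ∀ i, Measurable (f i)) {d : ι → ℝ}
    (hd : ∀ i, 0 ≤ d i) {nrm : ι → ℝ}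
    (hnrm : ∀ i, nrm i = ⨆ n : ℕ, Real.sqrt ((∫ x, f i x ^ 2 ∂(P n)) + ∫ x, f i x ^ 2 ∂(Q n)))
    (hsum : Summable fun i => d i * nrm i) :
    ∃ (g : ι → E → ℝ) (σ : ι → ℝ≥0), (∀ i, Measurable (g i)) ∧
      (∑' i, ENNReal.ofReal (d i) * σ i ≠ ∞) ∧
      (∀ i n, ∫⁻ x, ‖g i x‖ₑ ^ 2 ∂(P n) ≤ (σ i : ℝ≥0∞) ^ 2) ∧
      (∀ i n, ∫⁻ x, ‖g i x‖ₑ ^ 2 ∂(Q n) ≤ (σ i : ℝ≥0∞) ^ 2) ∧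
      ∀ i, g i = f i ∨ (g i = 0 ∧ ∀ R : ℝ≥0, ∃ x,
        (R : ℝ≥0∞) < ‖f i x‖ₑ / (1 + ∑' j, ENNReal.ofReal (d j) * ‖g j x‖ₑ)) := by
  classical
  let good : ι → Prop := fun i => ∃ K : ℝ≥0, ∀ n, ∫⁻ x, ‖f i x‖ₑ ^ 2 ∂(P n) ≤ K ∧
    ∫⁻ x, ‖f i x‖ₑ ^ 2 ∂(Q n) ≤ K
  have hnrm0 : ∀ i, 0 ≤ nrm i := fun i => by
    rw [hnrm]; exact Real.iSup_nonneg fun n => Real.sqrt_nonneg _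
  set g : ι → E → ℝ := fun i => if good i then f i else 0 with hgdef
  set σ : ι → ℝ≥0 := fun i => (nrm i).toNNReal with hσ
  have hgm : ∀ i, Measurable (g i) := fun i => by
    by_cases h : good i
    · simp only [hgdef, h, if_true]; exact hf i
    · simp only [hgdef, h, if_false]; exact measurable_const
  have hσsum : ∑' i, ENNReal.ofReal (d i) * σ i ≠ ∞ := by
    have e : ∀ i, ENNReal.ofReal (d i) * σ i = ENNReal.ofReal (d i * nrm i) := fun i => by
      rw [ENNReal.ofReal_mul (hd i)]; rfl
    simp_rw [e]
    exact hsum.tsum_ofReal_ne_top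
  have hbound : ∀ i n, ∫⁻ x, ‖g i x‖ₑ ^ 2 ∂(P n) ≤ (σ i : ℝ≥0∞) ^ 2 ∧
      ∫⁻ x, ‖g i x‖ₑ ^ 2 ∂(Q n) ≤ (σ i : ℝ≥0∞) ^ 2 := by
    intro i n
    by_cases h : good i
    · simp only [hgdef, h, if_true]
      obtain ⟨K, hK⟩ := h
      have hL : ∀ (μ : Measure E), ∫⁻ x, ‖f i x‖ₑ ^ 2 ∂μ ≤ K → MemLp (f i) 2 μ := fun μ hμ =>
        memLp_two_of_lintegral_enorm_sq_ne_top (hf i).aestronglyMeasurable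
          (hμ.trans_lt ENNReal.coe_lt_top).ne
      have hle : ∀ (μ : Measure E), ∫⁻ x, ‖f i x‖ₑ ^ 2 ∂μ ≤ K → ∫ x, f i x ^ 2 ∂μ ≤ K :=
        fun μ hμ => by
          have h1 := hμ
          rw [lintegral_enorm_sq_eq (hL μ hμ), ← ENNReal.ofReal_coe_nnreal] at h1
          exact (ENNReal.ofReal_le_ofReal_iff K.2).1 h1
      have hbdd : BddAbove (Set.range fun n : ℕ =>
          Real.sqrt ((∫ x, f i x ^ 2 ∂(P n)) + ∫ x, f i x ^ 2 ∂(Q n))) := by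
        refine ⟨Real.sqrt (K + K), ?_⟩
        rintro _ ⟨m, rfl⟩
        exact Real.sqrt_le_sqrt (add_le_add (hle _ (hK m).1) (hle _ (hK m).2))
      have hsq : (∫ x, f i x ^ 2 ∂(P n)) + ∫ x, f i x ^ 2 ∂(Q n) ≤ nrm i ^ 2 := by
        have h1 := le_ciSup hbdd n
        rw [← hnrm] at h1
        exact (Real.sqrt_le_left (hnrm0 i)).1 h1
      have hP0 : 0 ≤ ∫ x, f i x ^ 2 ∂(P n) := integral_nonneg fun x => sq_nonneg _
      have hQ0 : 0 ≤ ∫ x, f i x ^ 2 ∂(Q n) := integral_nonneg fun x => sq_nonneg _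
      have e : (σ i : ℝ≥0∞) ^ 2 = ENNReal.ofReal (nrm i ^ 2) := by
        rw [ENNReal.ofReal_pow (hnrm0 i)]; rfl
      rw [lintegral_enorm_sq_eq (hL _ (hK n).1), lintegral_enorm_sq_eq (hL _ (hK n).2), e]
      exact ⟨ENNReal.ofReal_le_ofReal (by linarith), ENNReal.ofReal_le_ofReal (by linarith)⟩
    · simp [hgdef, h]
  refine ⟨g, σ, hgm, hσsum, fun i n => (hbound i n).1, fun i n => (hbound i n).2, fun i => ?_⟩
  by_cases h : good i
  · exact Or.inl (by simp [hgdef, h])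
  refine Or.inr ⟨by simp [hgdef, h], fun R => ?_⟩
  by_contra! hR
  refine h ?_
  set G : E → ℝ≥0∞ := fun x => ∑' j, ENNReal.ofReal (d j) * ‖g j x‖ₑ with hG
  set S := ∑' i, ENNReal.ofReal (d i) * σ i with hS
  have hGm : Measurable G := Measurable.tsum fun i => (hgm i).enorm.const_mul _
  have key : ∀ (μ : Measure E) [IsProbabilityMeasure μ],
      (∀ i, ∫⁻ x, ‖g i x‖ₑ ^ 2 ∂μ ≤ (σ i : ℝ≥0∞) ^ 2) →
      ∫⁻ x, ‖f i x‖ₑ ^ 2 ∂μ ≤ (R : ℝ≥0∞) ^ 2 * (2 * (1 + S ^ 2)) := by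
    intro μ _ hμ
    obtain ⟨h1, h2⟩ := lintegral_tsum_enorm_ne_top hσsum hgm hμ
    have h3 : ∀ᵐ x ∂μ, ‖f i x‖ₑ ^ 2 ≤ (R : ℝ≥0∞) ^ 2 * (2 * (1 + G x ^ 2)) := by
      filter_upwards [ae_lt_top hGm h2] with x hx
      have h4 : ‖f i x‖ₑ ≤ R * (1 + G x) :=
        (ENNReal.div_le_iff (by simp) (by finiteness)).1 (hR x)
      refine (pow_le_pow_left' h4 2).trans ?_
      rw [mul_pow]
      refine mul_le_mul_right ?_ _
      have := ENNReal.rpow_add_le_mul_rpow_add_rpow 1 (G x) (p := 2) (by norm_num)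
      norm_num at this
      exact this
    refine (lintegral_mono_ae h3).trans ?_
    rw [lintegral_const_mul _ (by fun_prop), lintegral_const_mul _ (by fun_prop),
      lintegral_add_left measurable_const, lintegral_const, measure_univ, mul_one]
    gcongr
  have hfin : (R : ℝ≥0∞) ^ 2 * (2 * (1 + S ^ 2)) ≠ ∞ := by finiteness
  refine ⟨((R : ℝ≥0∞) ^ 2 * (2 * (1 + S ^ 2))).toNNReal, fun n => ?_⟩
  rw [ENNReal.coe_toNNReal hfin]
  exact ⟨key (P n) fun i => (hbound i n).1, key (Q n) fun i => (hbound i n).2⟩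

end SquareIntegrablePart

section Covariance

variable {Ω : Type*} [MeasurableSpace Ω] {ℙ : Measure Ω}

theorem covar_comm (Y Z : Ω → ℝ) : covar ℙ Y Z = covar ℙ Z Y := by
  simp only [covar, mul_comm]

theorem variance'_le_of_lintegral_sq_le [IsProbabilityMeasure ℙ] {Y : Ω → ℝ} (hY : Measurable Y)
    {σ : ℝ≥0} (h : ∫⁻ ω, ‖Y ω‖ₑ ^ 2 ∂ℙ ≤ (σ : ℝ≥0∞) ^ 2) : variance' ℙ Y ≤ (σ : ℝ) ^ 2 := by
  have hL : MemLp Y 2 ℙ := memLp_two_of_lintegral_enorm_sq_ne_top hY.aestronglyMeasurable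
    (h.trans_lt (by finiteness)).ne
  rw [lintegral_enorm_sq_eq hL, ← ENNReal.ofReal_coe_nnreal,
    ← ENNReal.ofReal_pow (NNReal.coe_nonneg _), ENNReal.ofReal_le_ofReal_iff (sq_nonneg _)] at h
  have e : variance' ℙ Y = ProbabilityTheory.variance Y ℙ := by
    rw [ProbabilityTheory.variance_eq_integral hY.aemeasurable, variance', covar]
    simp only [sq]
  rw [e]
  exact (ProbabilityTheory.variance_le_expectation_sq hY.aestronglyMeasurable).trans h

theorem abs_covar_le_of_decay [IsProbabilityMeasure ℙ] {Y Z : Ω → ℝ} (hY : Measurable Y)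
    (hZ : Measurable Z) {σ : ℝ≥0} (hYσ : ∫⁻ ω, ‖Y ω‖ₑ ^ 2 ∂ℙ ≤ (σ : ℝ≥0∞) ^ 2)
    (hZσ : ∫⁻ ω, ‖Z ω‖ₑ ^ 2 ∂ℙ ≤ (σ : ℝ≥0∞) ^ 2) {C ρ s : ℝ} (hC : 0 ≤ C) (hsρ : s ≤ ρ) {m : ℕ}
    (hm : 1 ≤ m)
    (h : |covar ℙ Y Z| ≤
      C * (m : ℝ) ^ (-ρ) * Real.sqrt (variance' ℙ Y) * Real.sqrt (variance' ℙ Z)) :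
    |covar ℙ Y Z| ≤ C * (m : ℝ) ^ (-s) * (σ : ℝ) ^ 2 := by
  have h1 : Real.sqrt (variance' ℙ Y) ≤ σ :=
    (Real.sqrt_le_left σ.2).2 (variance'_le_of_lintegral_sq_le hY hYσ)
  have h2 : Real.sqrt (variance' ℙ Z) ≤ σ :=
    (Real.sqrt_le_left σ.2).2 (variance'_le_of_lintegral_sq_le hZ hZσ)
  have h3 : (m : ℝ) ^ (-ρ) ≤ (m : ℝ) ^ (-s) :=
    Real.rpow_le_rpow_of_exponent_le (by exact_mod_cast hm) (by linarith)
  refine h.trans ?_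
  rw [sq, ← mul_assoc]
  gcongr

end Covariance

section Rate

variable {Ω : Type*} [MeasurableSpace Ω] {ℙ : Measure Ω} [IsProbabilityMeasure ℙ]
  {E : Type*} [MeasurableSpace E] {ι : Type*} [Countable ι]

theorem exists_eventually_measure_argmax_far_le {N : SignedMeasure E → ℝ}
    (hs : ∀ (a : ℝ) (ν : SignedMeasure E), N (a • ν) = |a| * N ν)
    (ha : ∀ ν₁ ν₂ : SignedMeasure E, N (ν₁ + ν₂) ≤ N ν₁ + N ν₂) {X : ℕ → ℕ → Ω → E}
    {P Q : ℕ → Measure E} [∀ n, IsProbabilityMeasure (P n)] [∀ n, IsProbabilityMeasure (Q n)]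
    {g : ι → E → ℝ} (hg : ∀ i, Measurable (g i)) {c : ι → ℝ≥0∞} {σ : ι → ℝ≥0}
    (hc : ∑' i, c i * σ i ≠ ∞) (hN : IsControlledBy N c g) {C s : ℝ} (hC : 0 ≤ C) (hs0 : 0 < s)
    (hs1 : s < 1) {r η b : ℝ} (hr0 : 0 < r) (hr1 : r ≤ 1) (hη0 : 0 < η) (hη1 : η ≤ 1)
    (hb : 0 < b) {κ : ℕ → ℕ} (hκ : ∀ᶠ n : ℕ in atTop, η ≤ (κ n : ℝ) / n ∧ η ≤ 1 - (κ n : ℝ) / n)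
    (hPQ : ∀ᶠ n : ℕ in atTop, b ≤ N ((P n).toSignedMeasure - (Q n).toSignedMeasure))
    (hL : ∀ n, IsDecayingBlock ℙ g σ C s (P n) (κ n) fun j => X n (j + 1))
    (hLr : ∀ n, IsDecayingBlock ℙ g σ C s (P n) (κ n) fun j => X n (κ n - j))
    (hR : ∀ n, IsDecayingBlock ℙ g σ C s (Q n) (n - κ n) fun j => X n (κ n + 1 + j))
    (hRr : ∀ n, IsDecayingBlock ℙ g σ C s (Q n) (n - κ n) fun j => X n (n - j))
    {δ : ℝ≥0∞} (hδ : δ ≠ 0) :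
    ∃ M : ℕ, ∀ᶠ n : ℕ in atTop, ℙ {ω | ∃ k, 1 ≤ k ∧ k < n ∧
      contrast N r n (fun i => (Measure.dirac (X n i ω)).toSignedMeasure) (κ n) ≤
        contrast N r n (fun i => (Measure.dirac (X n i ω)).toSignedMeasure) k ∧
      ¬ (κ n < k + M ∧ k < κ n + M)} ≤ δ := by
  have hδ6 : δ / 6 ≠ 0 := ENNReal.div_ne_zero.2 ⟨hδ, by norm_num⟩
  set ε : ℝ := r * η * b / 8 with hε
  have hε0 : 0 < ε := by positivity
  have hrη : r * η ≤ 1 := mul_le_one₀ hr1 hη0.le hη1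
  have hεb : 2 * ε ≤ b / 4 := by rw [hε]; nlinarith
  have hεη : 2 * ε < r * η * (b - 2 * ε) := by
    have h1 : r * η * (3 * b / 4) ≤ r * η * (b - 2 * ε) := by gcongr; linarith
    have h2 : 0 < r * η * b := by positivity
    refine lt_of_lt_of_le ?_ h1
    rw [hε]; linarith
  obtain ⟨M, hM, hfar⟩ := IsDecayingBlock.exists_measure_mul_lt_seminorm_le ℙ hg hc hN hC hs0 hs1
    hε0 hδ6
  refine ⟨M, ?_⟩
  set K := ∑' i, c i * σ i with hK
  set t : ℕ → ℝ := fun n => ε * (η * n) ^ r with ht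
  have hcrude : ∀ᶠ n : ℕ in atTop, (K * M) ^ 2 / ENNReal.ofReal (t n) ^ 2 ≤ δ / 6 := by
    have h1 : Tendsto t atTop atTop := ((tendsto_rpow_atTop hr0).comp
      (tendsto_natCast_atTop_atTop.const_mul_atTop hη0)).const_mul_atTop hε0
    have h2 : Tendsto (fun n => ENNReal.ofReal (t n ^ 2)) atTop (nhds ∞) :=
      ENNReal.tendsto_ofReal_atTop.comp ((tendsto_pow_atTop two_ne_zero).comp h1)
    have h3 : Tendsto (fun n => (K * M) ^ 2 / ENNReal.ofReal (t n ^ 2)) atTop (nhds 0) := by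
      have := ENNReal.Tendsto.const_div (a := (K * M) ^ 2) h2 (Or.inr (by finiteness))
      simpa using this
    filter_upwards [h3.eventually (ge_mem_nhds (pos_iff_ne_zero.2 hδ6))] with n hn
    rwa [← ENNReal.ofReal_pow (by positivity)]
  have hlarge : ∀ᶠ n : ℕ in atTop, (M : ℝ) ≤ η * n :=
    (tendsto_natCast_atTop_atTop.const_mul_atTop hη0).eventually_ge_atTop _
  filter_upwards [hκ, hPQ, hcrude, hlarge, eventually_gt_atTop 0] with n hκn hPQn hcn hMn hn0
  have hn : (0 : ℝ) < n := by exact_mod_cast hn0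
  have ht0 : 0 < t n := by positivity
  have hκ1 : η * n ≤ κ n := (le_div_iff₀ hn).1 hκn.1
  have hκ2 : η * n ≤ n - κ n := by
    have := hκn.2
    rw [← div_self hn.ne', ← sub_div, le_div_iff₀ hn] at this
    exact this
  have hκlt : κ n < n := by
    have : 0 < η * n := by positivity
    exact_mod_cast (by linarith : (κ n : ℝ) < n)
  rw [← Nat.cast_sub hκlt.le] at hκ2
  have ht1 : t n ≤ ε * (κ n : ℝ) ^ r := by simp only [ht]; gcongr
  have ht2 : t n ≤ ε * ((n - κ n : ℕ) : ℝ) ^ r := by simp only [ht]; gcongr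
  have hsplit : δ = δ / 6 + δ / 6 + δ / 6 + δ / 6 + δ / 6 + δ / 6 := by
    have h6 : (6 : ℝ≥0∞) * (δ / 6) = δ := ENNReal.mul_div_cancel (by norm_num) (by norm_num)
    nth_rewrite 1 [← h6]
    ring
  rw [hsplit]
  have hb1 := hfar (P n) (κ n) _ (hL n)
  have hb2 := hfar (P n) (κ n) _ (hLr n)
  have hb3 := hfar (Q n) (n - κ n) _ (hR n)
  have hb4 := hfar (Q n) (n - κ n) _ (hRr n)
  have hb5 := ((hL n).measure_exists_lt_seminorm_le hg hc hN M ht0).trans hcn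
  have hb6 := ((hRr n).measure_exists_lt_seminorm_le hg hc hN M ht0).trans hcn
  refine le_trans (measure_mono fun ω hω => ?_) ((measure_union_le _ _).trans (add_le_add
    ((measure_union_le _ _).trans (add_le_add ((measure_union_le _ _).trans (add_le_add
    ((measure_union_le _ _).trans (add_le_add ((measure_union_le _ _).trans (add_le_add
    hb1 hb2)) hb3)) hb4)) hb5)) hb6))
  by_contra hcon
  simp only [Set.mem_union, not_or, Set.mem_ofPred_eq, not_exists, not_and, not_lt] at hcon
  obtain ⟨⟨⟨⟨⟨h1, h2⟩, h3⟩, h4⟩, h5⟩, h6⟩ := hcon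
  obtain ⟨k, hk1, hkn, hmax, hk⟩ := hω
  exact hk (abs_argmax_sub_lt hs ha hr0 hr1 hk1 hkn hM (by exact_mod_cast hMn.trans hκ1)
    (by exact_mod_cast hMn.trans hκ2) hκn.1 hκn.2 hεη (by linarith)
    h1 (fun l hlM hl => (h5 l hlM hl).trans ht1) h2 h3 h4
    (fun l hlM hl => (h6 l hlM hl).trans ht2) hPQn hmax)

end Rate

section FloorChangePoint

theorem eventually_floor_mul_div_bounds {θ : ℝ} (hθ0 : 0 < θ) :
    ∀ᶠ n : ℕ in atTop, min (θ / 2) (1 - θ) ≤ (⌊(n : ℝ) * θ⌋₊ : ℝ) / n ∧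
      min (θ / 2) (1 - θ) ≤ 1 - (⌊(n : ℝ) * θ⌋₊ : ℝ) / n := by
  filter_upwards [tendsto_natCast_atTop_atTop.eventually_ge_atTop (2 / θ),
    eventually_gt_atTop 0] with n hn hn0
  have hn' : (0 : ℝ) < n := by exact_mod_cast hn0
  rw [div_le_iff₀ hθ0] at hn
  constructor
  · refine (min_le_left _ _).trans ((le_div_iff₀ hn').2 ?_)
    have := Nat.lt_floor_add_one ((n : ℝ) * θ)
    linarith
  · refine (min_le_right _ _).trans (sub_le_sub_left ((div_le_iff₀ hn').2 ?_) _)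
    rw [mul_comm θ]
    exact Nat.floor_le (by positivity)

theorem lt_abs_sub_of_lt_abs_inv_mul_sub {n M κ k : ℕ} {θ T : ℝ} (hn : 0 < n)
    (hθ : 0 ≤ θ) (hκ : κ = ⌊(n : ℝ) * θ⌋₊) (hT : (M : ℝ) + 1 ≤ T)
    (h : T * (n : ℝ)⁻¹ < |(n : ℝ)⁻¹ * k - θ|) : ¬ (κ < k + M ∧ k < κ + M) := by
  rintro ⟨h1, h2⟩
  have hn' : (0 : ℝ) < n := by exact_mod_cast hn
  have e : (n : ℝ)⁻¹ * k - θ = (k - n * θ) * (n : ℝ)⁻¹ := by field_simp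
  rw [e, abs_mul, abs_of_pos (inv_pos.2 hn'), mul_lt_mul_iff_left₀ (inv_pos.2 hn')] at h
  have h3 : (κ : ℝ) ≤ n * θ := by rw [hκ]; exact Nat.floor_le (by positivity)
  have h4 : (n : ℝ) * θ < κ + 1 := by rw [hκ]; exact Nat.lt_floor_add_one _
  have h1' : (κ : ℝ) < k + M := by exact_mod_cast h1
  have h2' : (k : ℝ) < κ + M := by exact_mod_cast h2
  refine h.not_ge (abs_le.2 ⟨?_, ?_⟩) <;> linarith

theorem isOp_inv_of_forall {Ω : Type*} [MeasurableSpace Ω] {μ : Measure Ω} {A : ℕ → Ω → ℝ}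
    {c : ℕ → ℝ} (h : ∀ δ : ℝ≥0∞, δ ≠ 0 → ∃ M : ℕ, ∀ T : ℝ, (M : ℝ) + 1 ≤ T →
      ∀ᶠ n in atTop, μ {ω | T * c n < |A n ω|} ≤ δ) : IsOp μ A c := by
  refine ENNReal.tendsto_nhds_zero.2 fun δ hδ => ?_
  obtain ⟨M, hM⟩ := h δ hδ.ne'
  filter_upwards [eventually_ge_atTop ((M : ℝ) + 1)] with T hT
  exact limsup_le_of_le (h := hM T hT)

end FloorChangePoint

/-- **Corollary 1**: the `O_p(n⁻¹)` rate for the change-point estimator when the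
distance between the two distributions is bounded away from zero (countable family). -/
theorem changePoint_rate_countable_family_nonvanishing
    {Ω : Type*} [MeasurableSpace Ω] (ℙ : Measure Ω) [IsProbabilityMeasure ℙ]
    {E : Type*} [MeasurableSpace E]
    -- the change point and the exponent of the weight
    (θ γ : ℝ) (hθ0 : 0 < θ) (hθ1 : θ < 1) (hγ0 : 0 ≤ γ) (hγ1 : γ < 1)
    -- the observations and their marginal laws
    (X : ℕ → ℕ → Ω → E) (hXmeas : ∀ n i, Measurable (X n i))
    (P Q : ℕ → Measure E) [∀ n, IsProbabilityMeasure (P n)] [∀ n, IsProbabilityMeasure (Q n)]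
    (hlaw : ∀ n i, 1 ≤ i → i ≤ n →
      Measure.map (X n i) ℙ = if (i : ℝ) ≤ (n : ℝ) * θ then P n else Q n)
    -- the seminorm on the space of finite signed measures
    (N : SignedMeasure E → ℝ)
    (hN_smul : ∀ (a : ℝ) (ν : SignedMeasure E), N (a • ν) = |a| * N ν)
    (hN_add : ∀ ν₁ ν₂ : SignedMeasure E, N (ν₁ + ν₂) ≤ N ν₁ + N ν₂)
    -- the weighted difference of empirical measures `D_k` (for `1 ≤ k < n`)
    (D : ℕ → ℕ → Ω → SignedMeasure E)
    (hD : ∀ n k ω, 1 ≤ k → k < n →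
      D n k ω = (((k : ℝ) / n) * (1 - (k : ℝ) / n)) ^ ((1 : ℝ) - γ) •
        ((k : ℝ)⁻¹ • ∑ i ∈ Finset.Icc 1 k, (Measure.dirac (X n i ω)).toSignedMeasure
          - ((n : ℝ) - k)⁻¹ •
              ∑ i ∈ Finset.Icc (k + 1) n, (Measure.dirac (X n i ω)).toSignedMeasure))
    -- the estimator: `1/n` times the smallest maximizer of `N(D_k)` over `1 ≤ k < n`
    (θhat : ℕ → Ω → ℝ)
    (hθhat : ∀ n ω, θhat n ω = (n : ℝ)⁻¹ *
      ((sInf {k : ℕ | k ∈ Finset.Ico 1 n ∧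
        ∀ j ∈ Finset.Ico 1 n, N (D n j ω) ≤ N (D n k ω)} : ℕ) : ℝ))
    -- the countable family `F`, the weights `d(f)` and the norms `‖f‖`
    (F : Set (E → ℝ)) (hFcount : F.Countable) (hFmeas : ∀ f ∈ F, Measurable f)
    (normF : (E → ℝ) → ℝ)
    (hnormF : ∀ f : E → ℝ, normF f =
      ⨆ n : ℕ, Real.sqrt ((∫ x, f x ^ 2 ∂(P n)) + ∫ x, f x ^ 2 ∂(Q n)))
    (d : (E → ℝ) → ℝ) (hd : ∀ f ∈ F, 0 < d f)
    (hdsum : Summable fun f : F => d f * normF f)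
    -- condition (2.9): the seminorm is dominated by the weighted moments
    (hNle : ∀ ν : SignedMeasure E, N ν ≤ ∑' f : F, d f * |sIntegral ν f|)
    -- Assumption 1: algebraic decay of correlations, uniformly over `F`
    (C ρ : ℝ) (hC : 0 < C) (hρ : 0 < ρ)
    (hA1 : ∀ f ∈ F, ∀ n i m : ℕ, 1 ≤ i → 1 ≤ m → i + m ≤ n →
      |covar ℙ (fun ω => f (X n i ω)) (fun ω => f (X n (i + m) ω))| ≤
        C * (m : ℝ) ^ (-ρ) *
          Real.sqrt (variance' ℙ fun ω => f (X n i ω)) *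
          Real.sqrt (variance' ℙ fun ω => f (X n (i + m) ω)))
    -- condition (2.10) with a constant lower bound `b > 0`
    (b : ℝ) (hb : 0 < b)
    (h210 : Tendsto (fun n =>
      ℙ {ω | N ((P n).toSignedMeasure - (Q n).toSignedMeasure) ≤ b}) atTop (nhds 0)) :
    -- conclusion (2.13): `θ̂_n − θ = O_p(n⁻¹)`
    IsOp ℙ (fun n ω => θhat n ω - θ) (fun n => (n : ℝ)⁻¹) := by
  classical
  have : Countable F := hFcount
  obtain ⟨g, σ, hg, hc, hP, hQ, hfg⟩ := exists_squareIntegrable_part (P := P) (Q := Q)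
    (f := fun i : F => (i : E → ℝ)) (fun i => hFmeas i i.2) (fun i => (hd i i.2).le)
    (fun i => hnormF i) hdsum
  have hN : IsControlledBy N (fun i : F => ENNReal.ofReal (d i)) g := fun μ ν _ _ hμ hν =>
    seminorm_sub_le_tsum hN_smul hN_add (fun i : F => hd i i.2) hNle (fun i => hFmeas i i.2) hg
      hfg μ ν hμ hν
  set κ : ℕ → ℕ := fun n => ⌊(n : ℝ) * θ⌋₊ with hκ
  set s : ℝ := min ρ (1 / 2) with hs
  have hs0 : 0 < s := lt_min hρ (by norm_num)
  have hs1 : s < 1 := (min_le_right _ _).trans_lt (by norm_num)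
  have hκn : ∀ n, κ n ≤ n := fun n => by
    refine Nat.floor_le_of_le ?_
    exact mul_le_of_le_one_right (Nat.cast_nonneg n) hθ1.le
  have hlawP : ∀ n i, 1 ≤ i → i ≤ κ n → Measure.map (X n i) ℙ = P n := fun n i hi hiκ => by
    rw [hlaw n i hi (hiκ.trans (hκn n)), if_pos ((Nat.le_floor_iff (by positivity)).1 hiκ)]
  have hlawQ : ∀ n i, κ n < i → i ≤ n → Measure.map (X n i) ℙ = Q n := fun n i hi hin => by
    rw [hlaw n i (by omega) hin, if_neg fun h => hi.not_ge (Nat.le_floor h)]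
  have hsq : ∀ (j : F) (n i : ℕ), 1 ≤ i → i ≤ n →
      ∫⁻ ω, ‖g j (X n i ω)‖ₑ ^ 2 ∂ℙ ≤ (σ j : ℝ≥0∞) ^ 2 := by
    intro j n i hi hin
    rw [← lintegral_map (f := fun x => ‖g j x‖ₑ ^ 2) ((hg j).enorm.pow_const 2) (hXmeas n i)]
    rcases le_or_gt i (κ n) with h | h
    · rw [hlawP n i hi h]; exact hP j n
    · rw [hlawQ n i h hin]; exact hQ j n
  have hcov : ∀ (j : F) (n i m : ℕ), 1 ≤ i → 1 ≤ m → i + m ≤ n →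
      |covar ℙ (fun ω => g j (X n i ω)) (fun ω => g j (X n (i + m) ω))| ≤
        C * (m : ℝ) ^ (-s) * (σ j : ℝ) ^ 2 := by
    intro j n i m hi hm him
    rcases hfg j with h | ⟨h, -⟩
    · refine abs_covar_le_of_decay ((hg j).comp (hXmeas n i)) ((hg j).comp (hXmeas n _))
        (hsq j n i hi (by omega)) (hsq j n _ (by omega) him) hC.le (min_le_left ρ (1 / 2)) hm ?_
      simp only [h]
      exact hA1 j j.2 n i m hi hm him
    · simp only [h, covar, Pi.zero_apply, integral_zero, sub_zero, mul_zero, abs_zero]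
      positivity
  have hcov' : ∀ (j : F) (n i i' m : ℕ), 1 ≤ m → 1 ≤ i' → i ≤ n → i' + m = i →
      |covar ℙ (fun ω => g j (X n i ω)) (fun ω => g j (X n i' ω))| ≤
        C * (m : ℝ) ^ (-s) * (σ j : ℝ) ^ 2 := by
    rintro j n _ i' m hm hi' hin rfl
    rw [covar_comm]
    exact hcov j n i' m hi' hm hin
  have hPQ : ∀ᶠ n : ℕ in atTop, b ≤ N ((P n).toSignedMeasure - (Q n).toSignedMeasure) := by
    filter_upwards [h210.eventually (gt_mem_nhds one_pos)] with n hn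
    by_contra! hlt
    refine hn.ne ?_
    simp [hlt.le]
  have hθ' : 0 < 1 - θ := by linarith
  refine isOp_inv_of_forall fun δ hδ => ?_
  obtain ⟨M, hM⟩ := exists_eventually_measure_argmax_far_le (ℙ := ℙ) (X := X) (P := P) (Q := Q)
    (κ := κ) (r := 1 - γ) (η := min (θ / 2) (1 - θ)) hN_smul hN_add hg hc hN hC.le hs0 hs1
    (by linarith) (by linarith) (lt_min (by linarith) hθ')
    ((min_le_left _ _).trans (by linarith)) hb (eventually_floor_mul_div_bounds hθ0) hPQ
    (fun n => ⟨fun j => hXmeas n _, fun j hj => hlawP n _ (by omega) (by omega),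
      fun i => hP i n, fun i j m hjm => by
        have := hκn n
        have h := hcov i n (j + 1) (m + 1) (by omega) (by omega) (by omega)
        rwa [show j + 1 + (m + 1) = j + (m + 1) + 1 by omega] at h⟩)
    (fun n => ⟨fun j => hXmeas n _, fun j hj => hlawP n _ (by omega) (by omega),
      fun i => hP i n, fun i j m hjm => by
        have := hκn n
        exact hcov' i n _ _ (m + 1) (by omega) (by omega) (by omega) (by omega)⟩)
    (fun n => ⟨fun j => hXmeas n _, fun j hj => hlawQ n _ (by omega) (by omega),
      fun i => hQ i n, fun i j m hjm => by
        have := hκn n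
        simpa only [add_assoc] using
          hcov i n (κ n + 1 + j) (m + 1) (by omega) (by omega) (by omega)⟩)
    (fun n => ⟨fun j => hXmeas n _, fun j hj => hlawQ n _ (by omega) (by omega),
      fun i => hQ i n, fun i j m hjm => by
        have := hκn n
        exact hcov' i n _ _ (m + 1) (by omega) (by omega) (by omega) (by omega)⟩) hδ
  refine ⟨M, fun T hT => ?_⟩
  filter_upwards [hM, eventually_ge_atTop 2,
    (eventually_floor_mul_div_bounds hθ0)] with n hn hn2 hκb
  have hn0 : (0 : ℝ) < n := by exact_mod_cast (by omega : 0 < n)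
  have hη0 : 0 < min (θ / 2) (1 - θ) := lt_min (by linarith) hθ'
  have hκ0 : 0 < κ n := by
    by_contra! h
    have h0 : κ n = 0 := by omega
    have := hκb.1
    change _ ≤ (κ n : ℝ) / n at this
    rw [h0, Nat.cast_zero, zero_div] at this
    linarith
  have hκlt : κ n < n := by
    have h1 := hκb.2
    have h2 : (κ n : ℝ) / n < 1 := by change _ ≤ 1 - (κ n : ℝ) / n at h1; linarith
    exact_mod_cast (div_lt_one hn0).1 h2
  have hDN : ∀ k ω, 1 ≤ k → k < n → N (D n k ω) =
      contrast N (1 - γ) n (fun i => (Measure.dirac (X n i ω)).toSignedMeasure) k := by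
    intro k ω hk hkn
    have hk1 : (k : ℝ) / n ≤ 1 := (div_le_one hn0).2 (by exact_mod_cast hkn.le)
    rw [hD n k ω hk hkn, hN_smul, abs_of_nonneg (Real.rpow_nonneg
      (mul_nonneg (by positivity) (by linarith)) _), contrast]
  refine (measure_mono fun ω hω => ?_).trans hn
  have hne : {k : ℕ | k ∈ Finset.Ico 1 n ∧
      ∀ j ∈ Finset.Ico 1 n, N (D n j ω) ≤ N (D n k ω)}.Nonempty := by
    obtain ⟨k, hk, hkmax⟩ := Finset.exists_max_image (Finset.Ico 1 n) (fun k => N (D n k ω))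
      ⟨1, Finset.mem_Ico.2 ⟨le_rfl, by omega⟩⟩
    exact ⟨k, hk, hkmax⟩
  obtain ⟨hk, hkmax⟩ := Nat.sInf_mem hne
  simp only [Set.mem_ofPred_eq, hθhat] at hω
  set k := sInf {k : ℕ | k ∈ Finset.Ico 1 n ∧
      ∀ j ∈ Finset.Ico 1 n, N (D n j ω) ≤ N (D n k ω)}
  obtain ⟨hk1, hkn⟩ := Finset.mem_Ico.1 hk
  refine ⟨k, hk1, hkn, ?_, lt_abs_sub_of_lt_abs_inv_mul_sub (by omega) hθ0.le rfl hT hω⟩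
  rw [← hDN k ω hk1 hkn, ← hDN (κ n) ω hκ0 hκlt]
  exact hkmax _ (Finset.mem_Ico.2 ⟨hκ0, hκlt⟩)
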